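/- Let I ⊂ ℝ be a bounded open interval, φ : I → ℝ a convex C² function, κ = φ'' ≥ 0, and μ the measure on I with density κ^{1/3} with respect to Lebesgue measure. Let χ ∈ 𝒮(ℝ) be even with ∫_ℝ χ = 1. Let 1 ≤ p < 4/3 and let q be defined by p' = 3q, with q' the conjugate exponent of q. For measurable functions ε', ε'' : I → (0,1), define the extension-type operator ℰ_{ε',ε''} g(ξ,η) = ∫_I χ̂(ε'(x)ξ) χ̂(ε''(x)η) e^{i(ξx + ηφ(x))} g(x) κ(x)^{1/3} dx. Then there is a constant C_p, independent of the functions ε' and ε'', such that ‖ℰ_{ε',ε''} g‖_{L^{p'}(ℝ²)} ≤ C_p ‖g‖_{L^{q'}(I,μ)} for all g ∈ C_c^∞(I). -/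

import Mathlib

/-!
Squaring the extension operator turns it into an operator on pairs `x < y`, whose phase is
`ξ (x + y) + η (φ x + φ y)`. The change of variables `(x, y) ↦ (x + y, φ x + φ y)` is injective by
convexity, with Jacobian `φ' y - φ' x`, so without the cutoffs the bilinear operator is a Fourier
transform and Plancherel gives an `L²` bound. By duality each cutoff `χ̂ (ε ξ)` acts as a
convolution at scale `ε` in the dual variable and costs one maximal function of Poisson averages in
one of the two directions, whatever the function `ε` is. Interpolating with the trivial bound
`L¹ → L^∞` leaves a negative power of `φ' y - φ' x` as a weight, which is absorbed by the
Hardy-Littlewood-Sobolev inequality in the variable `φ'`; the density `κ ^ (1 / 3)` is the one for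
which the remaining powers of the curvature match.
-/

open MeasureTheory Set SchwartzMap ENNReal

/-- The Fourier transform on `ℝ`, `χ̂(ξ) = ∫ χ(u) e^{-iuξ} du`. -/
noncomputable def fourierTransform1 (χ : ℝ → ℂ) (ξ : ℝ) : ℂ :=
  ∫ u : ℝ, Complex.exp (-Complex.I * (u * ξ)) * χ u

open scoped NNReal

section Plancherel

open scoped FourierTransform ContDiff

theorem eLpNorm_two_sq_eq_lintegral {α E : Type*} [MeasurableSpace α] [NormedAddCommGroup E]
    (f : α → E) (μ : Measure α) : eLpNorm f 2 μ ^ 2 = ∫⁻ x, ‖f x‖ₑ ^ 2 ∂μ := by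
  simpa using eLpNorm_nnreal_pow_eq_lintegral (f := f) (μ := μ) (p := 2) two_ne_zero

section

variable {V F : Type*} [NormedAddCommGroup V] [InnerProductSpace ℝ V] [FiniteDimensional ℝ V]
  [MeasurableSpace V] [BorelSpace V] [NormedAddCommGroup F] [InnerProductSpace ℂ F]
  [CompleteSpace F] {f : V → F}

theorem fourier_toLp_two_ae_eq (hf : Integrable f) (hf2 : MemLp f 2) :
    (𝓕 (hf2.toLp f) : Lp F 2 (volume : Measure V)) =ᵐ[volume] 𝓕 f := by
  have hcont : Continuous (𝓕 f) :=
    VectorFourier.fourierIntegral_continuous Real.continuous_fourierChar continuous_inner hf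
  refine ae_eq_of_integral_contDiff_smul_eq
    ((Lp.memLp _).locallyIntegrable one_le_two) hcont.locallyIntegrable fun g hg hg_supp => ?_
  have hG_supp : HasCompactSupport (Complex.ofRealCLM ∘ g) := hg_supp.comp_left rfl
  let G : 𝓢(V, ℂ) := hG_supp.toSchwartzMap (by fun_prop)
  let u : Lp F 2 (volume : Measure V) := hf2.toLp f
  calc ∫ ξ, g ξ • (𝓕 u : Lp F 2 (volume : Measure V)) ξ
      = Lp.toTemperedDistribution (𝓕 u : Lp F 2 (volume : Measure V)) G := by simp [G]
    _ = Lp.toTemperedDistribution u (𝓕 G) := by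
        rw [← Lp.fourier_toTemperedDistribution_eq u, TemperedDistribution.fourier_apply]
    _ = ∫ v, 𝓕 (G : V → ℂ) v • f v := by
        rw [Lp.toTemperedDistribution_apply]
        refine integral_congr_ae ?_
        filter_upwards [hf2.coeFn_toLp] with v hv
        rw [hv, fourier_coe]
    _ = ∫ ξ, G ξ • 𝓕 f ξ := by
        have := VectorFourier.integral_fourierIntegral_smul_eq_flip (L := innerₗ V)
          Real.continuous_fourierChar continuous_inner (G.integrable (μ := volume)) hf
        rwa [flip_innerₗ] at this
    _ = ∫ ξ, g ξ • 𝓕 f ξ := by simp [G]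

theorem eLpNorm_two_fourier (hf : Integrable f) (hf2 : MemLp f 2) :
    eLpNorm (𝓕 f) 2 = eLpNorm f 2 := by
  rw [← eLpNorm_congr_ae (fourier_toLp_two_ae_eq hf hf2), ← Lp.enorm_def, ← ofReal_norm,
    Lp.norm_fourier_eq, ofReal_norm, Lp.enorm_toLp]

theorem lintegral_sq_enorm_fourier_le (hf : Integrable f) :
    ∫⁻ ξ, ‖𝓕 f ξ‖ₑ ^ 2 ≤ ∫⁻ v, ‖f v‖ₑ ^ 2 := by
  by_cases hf2 : MemLp f 2
  · simp only [← eLpNorm_two_sq_eq_lintegral]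
    rw [eLpNorm_two_fourier hf hf2]
  · have htop : eLpNorm f 2 = ⊤ := not_lt_top.1 fun h => hf2 ⟨hf.1, h⟩
    rw [← eLpNorm_two_sq_eq_lintegral f volume, htop, ENNReal.top_pow two_ne_zero]
    exact le_top

end

theorem lintegral_comp_smul {E : Type*} [NormedAddCommGroup E] [NormedSpace ℝ E]
    [FiniteDimensional ℝ E] [MeasurableSpace E] [BorelSpace E] {μ : Measure E}
    [μ.IsAddHaarMeasure] (f : E → ℝ≥0∞) {r : ℝ} (hr : r ≠ 0) :
    ∫⁻ x, f (r • x) ∂μ = ENNReal.ofReal |(r ^ Module.finrank ℝ E)⁻¹| * ∫⁻ x, f x ∂μ := by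
  rw [← smul_eq_mul, ← lintegral_smul_measure, ← Measure.map_addHaar_smul μ hr]
  exact (lintegral_map_equiv f (MeasurableEquiv.smul₀ r hr)).symm

/-- The Fourier integral on `ℝ²` in the sign and scaling conventions of the extension operator,
`ĥ(w) = ∫ h(ζ) e^{i(ζ₁w₁ + ζ₂w₂)} dζ`. -/
noncomputable def fourierTransform2 (h : ℝ × ℝ → ℂ) (w : ℝ × ℝ) : ℂ :=
  ∫ ζ : ℝ × ℝ, Complex.exp (Complex.I * (ζ.1 * w.1 + ζ.2 * w.2)) * h ζ

theorem fourierTransform2_eq_fourier (h : ℝ × ℝ → ℂ) (w : WithLp 2 (ℝ × ℝ)) :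
    fourierTransform2 h (WithLp.ofLp w) =
      𝓕 (fun v : WithLp 2 (ℝ × ℝ) => h (WithLp.ofLp v)) ((-(2 * Real.pi)⁻¹ : ℝ) • w) := by
  rw [Real.fourier_eq', fourierTransform2, ← (WithLp.volume_preserving_ofLp ℝ ℝ).integral_comp
    (WithLp.homeomorphProd 2 ℝ ℝ).measurableEmbedding]
  refine integral_congr_ae (.of_forall fun v => ?_)
  have hpi : -2 * Real.pi * -(2 * Real.pi)⁻¹ = 1 := by field_simp
  simp only [inner_smul_right, ← mul_assoc, hpi, one_mul, WithLp.prod_inner_apply,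
    RCLike.inner_apply, conj_trivial, smul_eq_mul]
  push_cast
  ring_nf

theorem lintegral_sq_enorm_fourierTransform2_le {h : ℝ × ℝ → ℂ} (hh : Integrable h) :
    ∫⁻ w, ‖fourierTransform2 h w‖ₑ ^ 2 ≤
      ENNReal.ofReal ((2 * Real.pi) ^ 2) * ∫⁻ ζ, ‖h ζ‖ₑ ^ 2 := by
  have hemb := (WithLp.homeomorphProd 2 ℝ ℝ).measurableEmbedding
  have hpres := WithLp.volume_preserving_ofLp ℝ ℝ
  set H : WithLp 2 (ℝ × ℝ) → ℂ := fun v => h (WithLp.ofLp v)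
  have hH : Integrable H := (hpres.integrable_comp_emb hemb).2 hh
  have hc : -(2 * Real.pi)⁻¹ ≠ 0 := by simp [Real.pi_ne_zero]
  calc ∫⁻ w, ‖fourierTransform2 h w‖ₑ ^ 2
      = ∫⁻ w : WithLp 2 (ℝ × ℝ), ‖𝓕 H ((-(2 * Real.pi)⁻¹ : ℝ) • w)‖ₑ ^ 2 := by
        rw [← hpres.lintegral_comp_emb hemb]
        exact lintegral_congr fun w => by rw [← fourierTransform2_eq_fourier]
    _ = ENNReal.ofReal ((2 * Real.pi) ^ 2) * ∫⁻ ξ, ‖𝓕 H ξ‖ₑ ^ 2 := by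
        rw [lintegral_comp_smul (fun ξ => ‖𝓕 H ξ‖ₑ ^ 2) hc,
          (WithLp.linearEquiv 2 ℝ (ℝ × ℝ)).finrank_eq, Module.finrank_prod, Module.finrank_self]
        congr 2
        rw [abs_inv, abs_pow, abs_neg, abs_inv, abs_of_pos Real.two_pi_pos, inv_pow, inv_inv]
    _ ≤ ENNReal.ofReal ((2 * Real.pi) ^ 2) * ∫⁻ v, ‖H v‖ₑ ^ 2 := by
        exact mul_le_mul_right (lintegral_sq_enorm_fourier_le hH) _
    _ = ENNReal.ofReal ((2 * Real.pi) ^ 2) * ∫⁻ ζ, ‖h ζ‖ₑ ^ 2 := by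
        rw [← hpres.lintegral_comp_emb hemb (fun ζ => ‖h ζ‖ₑ ^ 2)]

end Plancherel

section DualityL2

variable {α β : Type*} [MeasurableSpace α] [MeasurableSpace β] {μ : Measure α} {ν : Measure β}

theorem lintegral_mul_sq_le {f g : α → ℝ≥0∞} (hf : AEMeasurable f μ) (hg : AEMeasurable g μ) :
    (∫⁻ x, f x * g x ∂μ) ^ 2 ≤ (∫⁻ x, f x ^ 2 ∂μ) * ∫⁻ x, g x ^ 2 ∂μ := by
  have h := pow_le_pow_left' (ENNReal.lintegral_mul_le_Lp_mul_Lq μ .two_two hf hg) 2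
  simpa only [Pi.mul_apply, mul_pow, ← ENNReal.rpow_natCast, ← ENNReal.rpow_mul, Nat.cast_ofNat,
    one_div, inv_mul_cancel₀ (two_ne_zero' ℝ), ENNReal.rpow_one] using h

theorem le_of_sq_le_mul_self {a b : ℝ≥0∞} (ha : a ≠ ∞) (h : a ^ 2 ≤ b * a) : a ≤ b := by
  rcases eq_or_ne a 0 with rfl | h0
  · exact zero_le
  · rwa [sq, ENNReal.mul_le_mul_iff_left h0 ha] at h

theorem lintegral_sq_le_of_forall_lintegral_mul_sq_le [SigmaFinite μ] {F : α → ℝ≥0∞}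
    (hF : Measurable F) {B : ℝ≥0∞}
    (h : ∀ g : α → ℝ≥0∞, Measurable g → ∫⁻ x, g x ∂μ ≠ ∞ →
      (∫⁻ x, g x * F x ∂μ) ^ 2 ≤ B * ∫⁻ x, g x ^ 2 ∂μ) :
    ∫⁻ x, F x ^ 2 ∂μ ≤ B := by
  let g (n : ℕ) : α → ℝ≥0∞ := (spanningSets μ n).indicator fun x => min (F x) n
  have hg (n : ℕ) : Measurable (g n) :=
    (hF.min measurable_const).indicator (measurableSet_spanningSets μ n)
  have hg_mono : Monotone g := fun m n hmn x =>
    (indicator_le_indicator_of_subset (monotone_spanningSets μ hmn) (fun _ => zero_le) x).trans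
      (indicator_le_indicator (by gcongr))
  have hg_le (n : ℕ) (x : α) : g n x ≤ F x := indicator_le (fun _ _ => min_le_left _ _) x
  have hg_pow_ne_top (n : ℕ) {k : ℕ} (hk : k ≠ 0) : ∫⁻ x, g n x ^ k ∂μ ≠ ∞ := by
    have hle (x : α) : g n x ^ k ≤ (spanningSets μ n).indicator (fun _ => (n : ℝ≥0∞) ^ k) x := by
      by_cases hx : x ∈ spanningSets μ n
      · simpa [g, hx] using pow_le_pow_left' (min_le_right _ _) k
      · simp [g, hx, hk]
    refine ne_top_of_le_ne_top ?_ (lintegral_mono hle)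
    rw [lintegral_indicator_const (measurableSet_spanningSets μ n)]
    have := (measure_spanningSets_lt_top μ n).ne
    finiteness
  have hg_sup (x : α) : ⨆ n, g n x = F x := by
    refine le_antisymm (iSup_le fun n => hg_le n x) (le_of_forall_lt fun c hc => ?_)
    obtain ⟨m, hm⟩ := ENNReal.exists_nat_gt hc.ne_top
    have hx : x ∈ spanningSets μ (max m (spanningSetsIndex μ x)) :=
      mem_spanningSets_of_index_le μ x (le_max_right _ _)
    refine lt_iSup_iff.2 ⟨max m (spanningSetsIndex μ x), ?_⟩
    simp only [g, indicator_of_mem hx]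
    exact lt_min hc (hm.trans_le (by simp))
  calc ∫⁻ x, F x ^ 2 ∂μ = ∫⁻ x, ⨆ n, g n x ^ 2 ∂μ := by
        simp_rw [← hg_sup, ENNReal.iSup_pow]
    _ = ⨆ n, ∫⁻ x, g n x ^ 2 ∂μ :=
        lintegral_iSup (fun n => (hg n).pow_const 2) fun m n hmn x =>
          pow_le_pow_left' (hg_mono hmn x) 2
    _ ≤ B := iSup_le fun n => by
        refine le_of_sq_le_mul_self (hg_pow_ne_top n two_ne_zero) ((pow_le_pow_left' ?_ 2).trans
          (h (g n) (hg n) (by simpa using hg_pow_ne_top n one_ne_zero)))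
        exact lintegral_mono fun x => by rw [sq]; gcongr; exact hg_le n x

theorem lintegral_mul_lintegral_kernel_swap [SFinite μ] [SFinite ν] {k : α → β → ℝ≥0∞}
    (hk : Measurable (Function.uncurry k)) {u : α → ℝ≥0∞} (hu : Measurable u) {v : β → ℝ≥0∞}
    (hv : Measurable v) :
    ∫⁻ x, u x * ∫⁻ y, k x y * v y ∂ν ∂μ = ∫⁻ y, (∫⁻ x, k x y * u x ∂μ) * v y ∂ν := by
  calc ∫⁻ x, u x * ∫⁻ y, k x y * v y ∂ν ∂μ = ∫⁻ x, ∫⁻ y, k x y * u x * v y ∂ν ∂μ := by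
        refine lintegral_congr fun x => ?_
        rw [← lintegral_const_mul _ (by fun_prop)]
        exact lintegral_congr fun y => by ring
    _ = ∫⁻ y, ∫⁻ x, k x y * u x * v y ∂μ ∂ν := lintegral_lintegral_swap (by fun_prop)
    _ = ∫⁻ y, (∫⁻ x, k x y * u x ∂μ) * v y ∂ν :=
        lintegral_congr fun y => lintegral_mul_const _ (by fun_prop)

theorem lintegral_sq_adjoint_kernel_le {k : α → α → ℝ≥0∞} [SFinite μ]
    (hk : Measurable (Function.uncurry k)) {M M' D : ℝ≥0∞} (hM : M ≠ ∞) (hM' : M' ≠ ∞)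
    (hk_le : ∀ x y, k x y ≤ M) (hk_int : ∀ x, ∫⁻ y, k x y ∂μ ≤ M')
    (hkk : ∀ x z, ∫⁻ y, k x y * k z y ∂μ ≤ D * (k x z + k z x))
    {g : α → ℝ≥0∞} (hg : Measurable g) (hg_int : ∫⁻ x, g x ∂μ ≠ ∞) :
    ∫⁻ y, (∫⁻ x, k x y * g x ∂μ) ^ 2 ∂μ ≤ (2 * D) ^ 2 * ∫⁻ x, g x ^ 2 ∂μ := by
  set Tg : α → ℝ≥0∞ := fun y => ∫⁻ x, k x y * g x ∂μ with hTg
  have hTg_meas : Measurable Tg := (hk.mul (hg.comp measurable_fst)).lintegral_prod_left'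
  have hfin : ∫⁻ y, Tg y ^ 2 ∂μ ≠ ∞ := by
    have hsup (y : α) : Tg y ≤ M * ∫⁻ x, g x ∂μ := by
      rw [← lintegral_const_mul _ hg]
      exact lintegral_mono fun x => by gcongr; exact hk_le x y
    have hL1 : ∫⁻ y, Tg y ∂μ ≤ M' * ∫⁻ x, g x ∂μ := by
      rw [hTg, lintegral_lintegral_swap (by fun_prop), ← lintegral_const_mul _ hg]
      refine lintegral_mono fun x => ?_
      rw [lintegral_mul_const _ (by fun_prop)]
      gcongr
      exact hk_int x
    refine ne_top_of_le_ne_top (b := (M * ∫⁻ x, g x ∂μ) * (M' * ∫⁻ x, g x ∂μ)) (by finiteness) ?_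
    calc ∫⁻ y, Tg y ^ 2 ∂μ ≤ ∫⁻ y, (M * ∫⁻ x, g x ∂μ) * Tg y ∂μ :=
          lintegral_mono fun y => by rw [sq]; gcongr; exact hsup y
      _ ≤ _ := by rw [lintegral_const_mul _ hTg_meas]; gcongr
  have hsq : ∫⁻ y, Tg y ^ 2 ∂μ ≤ 2 * D * ∫⁻ x, Tg x * g x ∂μ := by
    have hkTg (x : α) :
        ∫⁻ y, k x y * Tg y ∂μ ≤ D * ((∫⁻ z, k x z * g z ∂μ) + Tg x) := by
      rw [hTg, lintegral_mul_lintegral_kernel_swap (k := fun y z => k z y)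
        (hk.comp measurable_swap) (by fun_prop) hg, ← lintegral_add_left (by fun_prop),
        ← lintegral_const_mul _ (by fun_prop)]
      refine lintegral_mono fun z => ?_
      simp_rw [← add_mul, ← mul_assoc, mul_comm (k z _) (k x _)]
      gcongr
      exact hkk x z
    calc ∫⁻ y, Tg y ^ 2 ∂μ = ∫⁻ x, g x * ∫⁻ y, k x y * Tg y ∂μ ∂μ := by
          simp_rw [lintegral_mul_lintegral_kernel_swap hk hg hTg_meas, sq, hTg]
      _ ≤ ∫⁻ x, D * (g x * (∫⁻ z, k x z * g z ∂μ) + Tg x * g x) ∂μ := by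
          refine lintegral_mono fun x => (mul_le_mul_right (hkTg x) (g x)).trans_eq (by ring)
      _ = 2 * D * ∫⁻ x, Tg x * g x ∂μ := by
          rw [lintegral_const_mul _ (by fun_prop), lintegral_add_right _ (by fun_prop),
            lintegral_mul_lintegral_kernel_swap hk hg hg]
          ring
  refine le_of_sq_le_mul_self hfin ?_
  calc (∫⁻ y, Tg y ^ 2 ∂μ) ^ 2 ≤ (2 * D) ^ 2 * (∫⁻ x, Tg x * g x ∂μ) ^ 2 := by
        rw [← mul_pow]; gcongr
    _ ≤ (2 * D) ^ 2 * ((∫⁻ y, Tg y ^ 2 ∂μ) * ∫⁻ x, g x ^ 2 ∂μ) := by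
        gcongr; exact lintegral_mul_sq_le hTg_meas.aemeasurable hg.aemeasurable
    _ = _ := by ring

theorem lintegral_sq_kernel_le {k : α → α → ℝ≥0∞} [SigmaFinite μ]
    (hk : Measurable (Function.uncurry k)) {M M' D : ℝ≥0∞} (hM : M ≠ ∞) (hM' : M' ≠ ∞)
    (hk_le : ∀ x y, k x y ≤ M) (hk_int : ∀ x, ∫⁻ y, k x y ∂μ ≤ M')
    (hkk : ∀ x z, ∫⁻ y, k x y * k z y ∂μ ≤ D * (k x z + k z x))
    {f : α → ℝ≥0∞} (hf : Measurable f) :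
    ∫⁻ x, (∫⁻ y, k x y * f y ∂μ) ^ 2 ∂μ ≤ (2 * D) ^ 2 * ∫⁻ x, f x ^ 2 ∂μ := by
  refine lintegral_sq_le_of_forall_lintegral_mul_sq_le
    (hk.mul (hf.comp measurable_snd)).lintegral_prod_right' fun g hg hg_int => ?_
  calc (∫⁻ x, g x * ∫⁻ y, k x y * f y ∂μ ∂μ) ^ 2
      = (∫⁻ y, (∫⁻ x, k x y * g x ∂μ) * f y ∂μ) ^ 2 := by
        rw [lintegral_mul_lintegral_kernel_swap hk hg hf]
    _ ≤ (∫⁻ y, (∫⁻ x, k x y * g x ∂μ) ^ 2 ∂μ) * ∫⁻ y, f y ^ 2 ∂μ :=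
        lintegral_mul_sq_le (hk.mul (hg.comp measurable_fst)).lintegral_prod_left'.aemeasurable
          hf.aemeasurable
    _ ≤ (2 * D) ^ 2 * (∫⁻ x, g x ^ 2 ∂μ) * ∫⁻ y, f y ^ 2 ∂μ := by
        gcongr
        exact lintegral_sq_adjoint_kernel_le hk hM hM' hk_le hk_int hkk hg hg_int
    _ = _ := by ring

theorem integrable_mul_mul_kernel [SFinite μ] [SFinite ν] {Φ : α → β → ℂ}
    (hΦ : Measurable (Function.uncurry Φ)) {C : ℝ} (hΦ_le : ∀ x y, ‖Φ x y‖ ≤ C) {G : α → ℂ}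
    (hG : Integrable G μ) {h : β → ℂ} (hh : Integrable h ν) :
    Integrable (fun z : α × β => G z.1 * h z.2 * Φ z.1 z.2) (μ.prod ν) :=
  (hG.mul_prod hh).mul_bdd (c := C) hΦ.aestronglyMeasurable (.of_forall fun z => hΦ_le z.1 z.2)

theorem integral_mul_integral_kernel_swap [SFinite μ] [SFinite ν] {Φ : α → β → ℂ}
    (hΦ : Measurable (Function.uncurry Φ)) {C : ℝ} (hΦ_le : ∀ x y, ‖Φ x y‖ ≤ C) {G : α → ℂ}
    (hG : Integrable G μ) {h : β → ℂ} (hh : Integrable h ν) :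
    ∫ y, h y * ∫ x, G x * Φ x y ∂μ ∂ν = ∫ x, G x * ∫ y, h y * Φ x y ∂ν ∂μ := by
  simp_rw [← integral_const_mul]
  rw [← integral_integral_swap]
  · exact integral_congr_ae (.of_forall fun x => integral_congr_ae (.of_forall fun y => by ring))
  · exact (integrable_mul_mul_kernel hΦ hΦ_le hG hh).congr (.of_forall fun z => by
      simp only [Function.uncurry]; ring)

theorem exists_measurable_mul_eq_norm {E : β → ℂ} (hE : Measurable E) :
    ∃ u : β → ℂ, Measurable u ∧ (∀ y, ‖u y‖ ≤ 1) ∧ ∀ y, u y * E y = ‖E y‖ := by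
  refine ⟨fun y => starRingEnd ℂ (E y) / ‖E y‖, by fun_prop, fun y => ?_, fun y => ?_⟩
  · rw [norm_div, RCLike.norm_conj, Complex.norm_real, norm_norm]
    exact div_self_le_one _
  · rcases eq_or_ne (E y) 0 with h0 | h0
    · simp [h0]
    · have : (‖E y‖ : ℂ) ≠ 0 := by simpa using h0
      rw [div_mul_eq_mul_div, Complex.conj_mul', sq, mul_div_cancel_right₀ _ this]

theorem lintegral_mul_enorm_eq_enorm_integral {E : Type*} [NormedAddCommGroup E] {g : β → ℝ≥0∞}
    (hg : Measurable g) (hg_int : ∫⁻ y, g y ∂ν ≠ ∞) {F : β → E}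
    (hF : Integrable (fun y => (g y).toReal * ‖F y‖) ν) :
    ∫⁻ y, g y * ‖F y‖ₑ ∂ν = ‖∫ y, (g y).toReal * ‖F y‖ ∂ν‖ₑ := by
  rw [Real.enorm_of_nonneg (integral_nonneg fun y => by positivity),
    ofReal_integral_eq_lintegral_ofReal hF (.of_forall fun y => by positivity)]
  refine lintegral_congr_ae ?_
  filter_upwards [ae_lt_top hg hg_int] with y hy
  rw [ofReal_mul toReal_nonneg, ofReal_toReal hy.ne, ofReal_norm]

theorem lintegral_sq_enorm_integral_mul_le_of_adjoint [SigmaFinite μ] [SigmaFinite ν]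
    {Φ : α → β → ℂ} (hΦ : Measurable (Function.uncurry Φ)) {C : ℝ} (hΦ_le : ∀ x y, ‖Φ x y‖ ≤ C)
    {K : ℝ≥0∞} (hadj : ∀ h : β → ℂ, Measurable h → Integrable h ν →
      ∫⁻ x, ‖∫ y, h y * Φ x y ∂ν‖ₑ ^ 2 ∂μ ≤ K * ∫⁻ y, ‖h y‖ₑ ^ 2 ∂ν)
    {G : α → ℂ} (hG : Measurable G) (hG_int : Integrable G μ) :
    ∫⁻ y, ‖∫ x, G x * Φ x y ∂μ‖ₑ ^ 2 ∂ν ≤ K * ∫⁻ x, ‖G x‖ₑ ^ 2 ∂μ := by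
  set E : β → ℂ := fun y => ∫ x, G x * Φ x y ∂μ with hE
  have hE_meas : Measurable E :=
    ((hG.comp measurable_snd).mul (hΦ.comp measurable_swap)).stronglyMeasurable
      |>.integral_prod_right'.measurable
  refine lintegral_sq_le_of_forall_lintegral_mul_sq_le hE_meas.enorm fun g hg hg_int => ?_
  obtain ⟨u, hu, hu_le, huE⟩ := exists_measurable_mul_eq_norm hE_meas
  let h : β → ℂ := fun y => (g y).toReal * u y
  have hh : Measurable h := by fun_prop
  have hh_le (y : β) : ‖h y‖ₑ ≤ g y := by
    rw [← ofReal_norm, norm_mul, Complex.norm_real, Real.norm_of_nonneg toReal_nonneg]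
    exact (ofReal_le_ofReal (mul_le_of_le_one_right toReal_nonneg (hu_le y))).trans
      ofReal_toReal_le
  have hh_int : Integrable h ν :=
    ⟨hh.aestronglyMeasurable, (lintegral_mono hh_le).trans_lt hg_int.lt_top⟩
  have hhE (y : β) : h y * E y = ((g y).toReal * ‖E y‖ : ℝ) := by
    simp only [h, mul_assoc, huE, Complex.ofReal_mul]
  have hhE_int : Integrable (fun y => h y * E y) ν := by
    refine (integrable_mul_mul_kernel hΦ hΦ_le hG_int hh_int).integral_prod_right.congr
      (.of_forall fun y => ?_)
    simp only [hE, ← integral_const_mul]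
    exact integral_congr_ae (.of_forall fun x => by ring)
  have hadj_meas : Measurable fun x => ∫ y, h y * Φ x y ∂ν :=
    ((hh.comp measurable_snd).mul hΦ).stronglyMeasurable.integral_prod_right'.measurable
  calc (∫⁻ y, g y * ‖E y‖ₑ ∂ν) ^ 2 = ‖∫ y, h y * E y ∂ν‖ₑ ^ 2 := by
        rw [lintegral_mul_enorm_eq_enorm_integral hg hg_int (by simpa [hhE] using hhE_int.re)]
        simp_rw [hhE, integral_complex_ofReal, ← ofReal_norm, Complex.norm_real]
    _ = ‖∫ x, G x * ∫ y, h y * Φ x y ∂ν ∂μ‖ₑ ^ 2 := by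
        rw [integral_mul_integral_kernel_swap hΦ hΦ_le hG_int hh_int]
    _ ≤ (∫⁻ x, ‖G x‖ₑ * ‖∫ y, h y * Φ x y ∂ν‖ₑ ∂μ) ^ 2 := by
        simp_rw [← enorm_mul]; gcongr; exact enorm_integral_le_lintegral_enorm _
    _ ≤ (∫⁻ x, ‖G x‖ₑ ^ 2 ∂μ) * ∫⁻ x, ‖∫ y, h y * Φ x y ∂ν‖ₑ ^ 2 ∂μ :=
        lintegral_mul_sq_le hG.enorm.aemeasurable hadj_meas.enorm.aemeasurable
    _ ≤ (∫⁻ x, ‖G x‖ₑ ^ 2 ∂μ) * (K * ∫⁻ y, g y ^ 2 ∂ν) := by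
        gcongr
        refine (hadj h hh hh_int).trans ?_
        gcongr with y
        exact hh_le y
    _ = K * (∫⁻ x, ‖G x‖ₑ ^ 2 ∂μ) * ∫⁻ y, g y ^ 2 ∂ν := by ring

end DualityL2

section PoissonMaximal

theorem exists_measurable_eq_partialSups {α : Type*} [MeasurableSpace α] {F : ℕ → α → ℝ≥0∞}
    (hF : ∀ n, Measurable (F n)) (N : ℕ) :
    ∃ e : α → ℕ, Measurable e ∧ (∀ x, e x ≤ N) ∧ ∀ x, partialSups F N x = F (e x) x := by
  classical
  have hex (x : α) : ∃ n, n ≤ N ∧ partialSups F N x = F n x := by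
    obtain ⟨n, hn, h⟩ := exists_partialSups_eq (fun n => F n x) N
    exact ⟨n, hn, by rw [Pi.partialSups_apply, h]⟩
  have hmeas (n : ℕ) : Measurable (partialSups F n) := by
    induction n with
    | zero => simpa using hF 0
    | succ n ih => simpa using ih.sup (hF (n + 1))
  refine ⟨fun x => Nat.find (hex x), measurable_find hex fun n => ?_,
    fun x => (Nat.find_spec (hex x)).1, fun x => (Nat.find_spec (hex x)).2⟩
  exact (MeasurableSet.const _).inter (measurableSet_eq_fun (hmeas N) (hF n))

theorem lintegral_sq_iSup_le_of_forall_selection {α : Type*} [MeasurableSpace α] {μ : Measure α}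
    {F : ℕ → α → ℝ≥0∞} (hF : ∀ n, Measurable (F n)) {B : ℝ≥0∞}
    (h : ∀ (N : ℕ) (e : α → ℕ), Measurable e → (∀ x, e x ≤ N) → ∫⁻ x, F (e x) x ^ 2 ∂μ ≤ B) :
    ∫⁻ x, (⨆ n, F n x) ^ 2 ∂μ ≤ B := by
  choose e he he_le heq using exists_measurable_eq_partialSups hF
  have hmeas (N : ℕ) : Measurable (partialSups F N) := by
    rw [funext (heq N)]
    exact (measurable_from_prod_countable_right (f := fun z : ℕ × α => F z.1 z.2) hF).comp
      ((he N).prodMk measurable_id)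
  have hmono : Monotone fun N x => partialSups F N x ^ 2 := fun m n hmn x =>
    pow_le_pow_left' ((partialSups F).monotone hmn x) 2
  calc ∫⁻ x, (⨆ n, F n x) ^ 2 ∂μ = ∫⁻ x, ⨆ N, partialSups F N x ^ 2 ∂μ := by
        refine lintegral_congr fun x => ?_
        simp_rw [← ENNReal.iSup_pow, Pi.partialSups_apply, iSup_partialSups_eq]
    _ = ⨆ N, ∫⁻ x, partialSups F N x ^ 2 ∂μ :=
        lintegral_iSup (fun N => (hmeas N).pow_const 2) hmono
    _ ≤ B := iSup_le fun N => by simpa only [heq] using h N (e N) (he N) (he_le N)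

/-- The Poisson kernel `s / (s² + y²)` of the upper half-plane, with total mass `π`. -/
noncomputable def halfPlanePoisson (s y : ℝ) : ℝ≥0∞ :=
  ENNReal.ofReal (s / (s ^ 2 + y ^ 2))

theorem measurable_halfPlanePoisson : Measurable (Function.uncurry halfPlanePoisson) := by
  unfold halfPlanePoisson Function.uncurry
  fun_prop

theorem halfPlanePoisson_sub_comm (s x y : ℝ) :
    halfPlanePoisson s (x - y) = halfPlanePoisson s (y - x) := by
  rw [halfPlanePoisson, halfPlanePoisson, sub_sq_comm]

theorem halfPlanePoisson_le {s : ℝ} (hs : 0 < s) (y : ℝ) :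
    halfPlanePoisson s y ≤ ENNReal.ofReal s⁻¹ := by
  refine ENNReal.ofReal_le_ofReal ?_
  rw [div_le_iff₀ (by positivity)]
  field_simp
  nlinarith [sq_nonneg y]

theorem lintegral_halfPlanePoisson {s : ℝ} (hs : 0 < s) :
    ∫⁻ y, halfPlanePoisson s y = ENNReal.ofReal Real.pi := by
  have hdiv (y : ℝ) : s / (s ^ 2 + y ^ 2) = s⁻¹ * (1 + (s⁻¹ * y) ^ 2)⁻¹ := by field_simp
  have hint : Integrable fun y : ℝ => s⁻¹ * (1 + (s⁻¹ * y) ^ 2)⁻¹ :=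
    (integrable_inv_one_add_sq.comp_mul_left' (inv_ne_zero hs.ne')).const_mul _
  simp_rw [halfPlanePoisson, hdiv]
  rw [← ofReal_integral_eq_lintegral_ofReal hint (.of_forall fun y => by positivity),
    integral_const_mul, Measure.integral_comp_mul_left (fun y : ℝ => (1 + y ^ 2)⁻¹),
    integral_univ_inv_one_add_sq, inv_inv, abs_of_pos hs, smul_eq_mul,
    inv_mul_cancel_left₀ hs.ne']

theorem lintegral_halfPlanePoisson_sub {s : ℝ} (hs : 0 < s) (x : ℝ) :
    ∫⁻ y, halfPlanePoisson s (x - y) = ENNReal.ofReal Real.pi := by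
  rw [lintegral_sub_left_eq_self (halfPlanePoisson s) x, lintegral_halfPlanePoisson hs]

theorem div_add_sq_mul_le {s t : ℝ} (ht : 0 < t) (hts : t ≤ s) (a b : ℝ) :
    s / (s ^ 2 + a ^ 2) * (t / (t ^ 2 + b ^ 2)) ≤
      2 * (s / (s ^ 2 + (a + b) ^ 2)) * (s / (s ^ 2 + a ^ 2) + t / (t ^ 2 + b ^ 2)) := by
  have hs : 0 < s := ht.trans_le hts
  -- The reciprocals of the two factors are `s + a² / s` and `t + b² / t`.
  have hrecip : (s ^ 2 + (a + b) ^ 2) / s ≤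
      2 * ((s ^ 2 + a ^ 2) / s + (t ^ 2 + b ^ 2) / t) := by
    have hb : b ^ 2 / s ≤ b ^ 2 / t := by gcongr
    have hab : (a + b) ^ 2 / s ≤ 2 * (a ^ 2 / s + b ^ 2 / s) := by
      rw [← add_div, ← mul_div_assoc]
      gcongr
      exact add_sq_le
    have hadd (r c : ℝ) (hr : 0 < r) : (r ^ 2 + c ^ 2) / r = r + c ^ 2 / r := by field_simp
    rw [hadd s _ hs, hadd s _ hs, hadd t _ ht]
    linarith
  calc s / (s ^ 2 + a ^ 2) * (t / (t ^ 2 + b ^ 2))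
      = s / (s ^ 2 + (a + b) ^ 2) * (s / (s ^ 2 + a ^ 2)) * (t / (t ^ 2 + b ^ 2)) *
          ((s ^ 2 + (a + b) ^ 2) / s) := by field_simp
    _ ≤ s / (s ^ 2 + (a + b) ^ 2) * (s / (s ^ 2 + a ^ 2)) * (t / (t ^ 2 + b ^ 2)) *
          (2 * ((s ^ 2 + a ^ 2) / s + (t ^ 2 + b ^ 2) / t)) := by gcongr
    _ = _ := by field_simp; ring

theorem halfPlanePoisson_mul_le {s t : ℝ} (ht : 0 < t) (hts : t ≤ s) (a b : ℝ) :
    halfPlanePoisson s a * halfPlanePoisson t b ≤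
      2 * halfPlanePoisson s (a + b) * (halfPlanePoisson s a + halfPlanePoisson t b) := by
  have hs : 0 < s := ht.trans_le hts
  simp only [halfPlanePoisson]
  rw [← ofReal_add (by positivity) (by positivity), ← ofReal_ofNat (n := 2),
    ← ofReal_mul (by positivity), ← ofReal_mul (by positivity), ← ofReal_mul (by positivity)]
  exact ofReal_le_ofReal (div_add_sq_mul_le ht hts a b)

theorem lintegral_halfPlanePoisson_mul_le_of_le {s t : ℝ} (ht : 0 < t) (hts : t ≤ s) (x z : ℝ) :
    ∫⁻ y, halfPlanePoisson s (x - y) * halfPlanePoisson t (z - y) ≤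
      4 * ENNReal.ofReal Real.pi * halfPlanePoisson s (x - z) := by
  have hs : 0 < s := ht.trans_le hts
  have hmeas (r w : ℝ) : Measurable fun y => halfPlanePoisson r (w - y) :=
    measurable_halfPlanePoisson.comp (f := fun y => (r, w - y)) (by fun_prop)
  calc ∫⁻ y, halfPlanePoisson s (x - y) * halfPlanePoisson t (z - y)
      ≤ ∫⁻ y, 2 * halfPlanePoisson s (x - z) *
          (halfPlanePoisson s (x - y) + halfPlanePoisson t (z - y)) := by
        refine lintegral_mono fun y => ?_
        rw [halfPlanePoisson_sub_comm t z y, ← sub_add_sub_cancel x y z]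
        exact halfPlanePoisson_mul_le ht hts (x - y) (y - z)
    _ = 2 * halfPlanePoisson s (x - z) * (ENNReal.ofReal Real.pi + ENNReal.ofReal Real.pi) := by
        rw [lintegral_const_mul' (2 * halfPlanePoisson s (x - z)) _
            (mul_ne_top ofNat_ne_top ofReal_ne_top),
          lintegral_add_left (hmeas s x),
          lintegral_halfPlanePoisson_sub hs, lintegral_halfPlanePoisson_sub ht]
    _ = 4 * ENNReal.ofReal Real.pi * halfPlanePoisson s (x - z) := by ring

theorem lintegral_halfPlanePoisson_mul_le {s t : ℝ} (hs : 0 < s) (ht : 0 < t) (x z : ℝ) :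
    ∫⁻ y, halfPlanePoisson s (x - y) * halfPlanePoisson t (z - y) ≤
      4 * ENNReal.ofReal Real.pi * (halfPlanePoisson s (x - z) + halfPlanePoisson t (z - x)) := by
  rcases le_total t s with h | h
  · exact (lintegral_halfPlanePoisson_mul_le_of_le ht h x z).trans
      (mul_le_mul_right le_self_add _)
  · simp_rw [mul_comm (halfPlanePoisson s _)]
    exact (lintegral_halfPlanePoisson_mul_le_of_le hs h z x).trans
      (mul_le_mul_right le_add_self _)

theorem lintegral_sq_halfPlanePoisson_average_le {e : ℝ → ℝ} (he : Measurable e) {δ : ℝ}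
    (hδ : 0 < δ) (he_ge : ∀ x, δ ≤ e x) {f : ℝ → ℝ≥0∞} (hf : Measurable f) :
    ∫⁻ x, (∫⁻ y, halfPlanePoisson (e x) (x - y) * f y) ^ 2 ≤
      (8 * ENNReal.ofReal Real.pi) ^ 2 * ∫⁻ y, f y ^ 2 := by
  have he_pos (x : ℝ) : 0 < e x := hδ.trans_le (he_ge x)
  have hk : Measurable (Function.uncurry fun x y => halfPlanePoisson (e x) (x - y)) :=
    measurable_halfPlanePoisson.comp (f := fun z : ℝ × ℝ => (e z.1, z.1 - z.2)) (by fun_prop)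
  have h := lintegral_sq_kernel_le hk ofReal_ne_top ofReal_ne_top
    (fun x y => (halfPlanePoisson_le (he_pos x) _).trans
      (ofReal_le_ofReal (inv_anti₀ hδ (he_ge x))))
    (fun x => (lintegral_halfPlanePoisson_sub (he_pos x) x).le)
    (fun x z => lintegral_halfPlanePoisson_mul_le (he_pos x) (he_pos z) x z) hf
  rwa [← mul_assoc, show (2 : ℝ≥0∞) * 4 = 8 by norm_num] at h

/-- The maximal function of the Poisson averages of `f` over the scales `1 / (n + 1)`; a countable
set of scales keeps it measurable. -/
noncomputable def poissonMaximal (f : ℝ → ℝ≥0∞) (u : ℝ) : ℝ≥0∞ :=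
  ⨆ n : ℕ, ∫⁻ y, halfPlanePoisson (1 / ((n : ℝ) + 1)) (u - y) * f y

theorem lintegral_sq_poissonMaximal_le {f : ℝ → ℝ≥0∞} (hf : Measurable f) :
    ∫⁻ u, poissonMaximal f u ^ 2 ≤ (8 * ENNReal.ofReal Real.pi) ^ 2 * ∫⁻ y, f y ^ 2 := by
  refine lintegral_sq_iSup_le_of_forall_selection (fun n => ?_) fun N e he he_le =>
    lintegral_sq_halfPlanePoisson_average_le (e := fun x => 1 / ((e x : ℝ) + 1)) (by fun_prop)
      (Nat.one_div_pos_of_nat (n := N)) (fun x => Nat.one_div_le_one_div (he_le x)) hf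
  exact ((measurable_halfPlanePoisson.comp
    (f := fun z : ℝ × ℝ => (1 / ((n : ℝ) + 1), z.1 - z.2)) (by fun_prop)).mul
    (hf.comp measurable_snd)).lintegral_prod_right'

theorem exists_one_div_nat_add_one_near {ε : ℝ} (hε : ε ∈ Ioo (0 : ℝ) 1) :
    ∃ n : ℕ, ε ≤ 1 / ((n : ℝ) + 1) ∧ 1 / ((n : ℝ) + 1) ≤ 2 * ε := by
  obtain ⟨n, hn⟩ :=
    Nat.exists_eq_add_of_le' ((Nat.one_le_floor_iff _).2 (one_le_one_div hε.1 hε.2.le))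
  have hle : (n : ℝ) + 1 ≤ 1 / ε := by
    exact_mod_cast hn ▸ Nat.floor_le (one_div_nonneg.2 hε.1.le)
  have hlt : 1 / ε < (n : ℝ) + 1 + 1 := by exact_mod_cast hn ▸ Nat.lt_floor_add_one (1 / ε)
  refine ⟨n, (le_one_div (by positivity) hε.1).1 hle, ?_⟩
  rw [div_lt_iff₀ hε.1] at hlt
  rw [div_le_iff₀ (by positivity)]
  nlinarith [hε.1, (n.cast_nonneg : (0 : ℝ) ≤ n)]

theorem div_one_add_sq_le_halfPlanePoisson {ε s : ℝ} (hε : 0 < ε) (hεs : ε ≤ s) (hsε : s ≤ 2 * ε)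
    (C a : ℝ) :
    ENNReal.ofReal (C / (1 + a ^ 2)) ≤
      ENNReal.ofReal (2 * C) * (ENNReal.ofReal ε * halfPlanePoisson s (ε * a)) := by
  rcases le_or_gt C 0 with hC | hC
  · rw [ofReal_of_nonpos (div_nonpos_of_nonpos_of_nonneg hC (by positivity))]
    exact zero_le
  have hs : 0 < s := hε.trans_le hεs
  rw [halfPlanePoisson, ← ofReal_mul hε.le, ← ofReal_mul (by positivity)]
  refine ofReal_le_ofReal ?_
  have hden : s ^ 2 + (ε * a) ^ 2 ≤ 2 * (ε * s) * (1 + a ^ 2) := by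
    nlinarith [mul_nonneg hε.le hs.le, mul_le_mul_of_nonneg_left hεs hε.le,
      mul_le_mul_of_nonneg_right hsε hs.le,
      mul_le_mul_of_nonneg_right (mul_le_mul_of_nonneg_left hεs hε.le) (sq_nonneg a),
      mul_nonneg (mul_nonneg hε.le hs.le) (sq_nonneg a)]
  rw [show 2 * C * (ε * (s / (s ^ 2 + (ε * a) ^ 2))) =
    C * (2 * (ε * s)) / (s ^ 2 + (ε * a) ^ 2) by ring, div_le_div_iff₀ (by positivity)
    (by positivity), mul_assoc]
  gcongr

theorem lintegral_mul_dilate_le_poissonMaximal {f : ℝ → ℝ≥0∞} {c : ℝ → ℝ≥0∞}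
    {C : ℝ} (hc : ∀ a, c a ≤ ENNReal.ofReal (C / (1 + a ^ 2))) {ε : ℝ} (hε : ε ∈ Ioo (0 : ℝ) 1)
    (u : ℝ) :
    ∫⁻ a, c a * f (u - ε * a) ≤ ENNReal.ofReal (2 * C) * poissonMaximal f u := by
  obtain ⟨n, hn, hn'⟩ := exists_one_div_nat_add_one_near hε
  set s : ℝ := 1 / ((n : ℝ) + 1)
  calc ∫⁻ a, c a * f (u - ε * a)
      ≤ ∫⁻ a, ENNReal.ofReal (2 * C) *
          (ENNReal.ofReal ε * (halfPlanePoisson s (ε * a) * f (u - ε * a))) := by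
        refine lintegral_mono fun a => ?_
        rw [← mul_assoc, ← mul_assoc, mul_assoc (ENNReal.ofReal (2 * C))]
        exact mul_le_mul_left ((hc a).trans
          (div_one_add_sq_le_halfPlanePoisson hε.1 hn hn' C a)) _
    _ = ENNReal.ofReal (2 * C) * ∫⁻ y, halfPlanePoisson s (u - y) * f y := by
        have hscale := lintegral_comp_smul (μ := volume)
          (fun y => halfPlanePoisson s y * f (u - y)) hε.1.ne'
        rw [Module.finrank_self, pow_one, abs_inv, abs_of_pos hε.1] at hscale
        rw [lintegral_const_mul' _ _ ofReal_ne_top, lintegral_const_mul' _ _ ofReal_ne_top]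
        simp only [smul_eq_mul] at hscale
        rw [hscale, ← mul_assoc (ENNReal.ofReal ε), ← ofReal_mul hε.1.le,
          mul_inv_cancel₀ hε.1.ne', ofReal_one, one_mul,
          ← lintegral_sub_left_eq_self (fun y => halfPlanePoisson s y * f (u - y)) u]
        simp only [_root_.sub_sub_cancel]
    _ ≤ ENNReal.ofReal (2 * C) * poissonMaximal f u :=
        mul_le_mul_right (le_iSup (fun n : ℕ =>
          ∫⁻ y, halfPlanePoisson (1 / ((n : ℝ) + 1)) (u - y) * f y) n) _

end PoissonMaximal

section DirectionalMaximal

/-- `c` times the maximal function of the Poisson averages in the first variable. -/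
noncomputable def maximalFst (c : ℝ≥0∞) (f : ℝ × ℝ → ℝ≥0∞) (w : ℝ × ℝ) : ℝ≥0∞ :=
  c * poissonMaximal (fun u => f (u, w.2)) w.1

/-- `c` times the maximal function of the Poisson averages in the second variable. -/
noncomputable def maximalSnd (c : ℝ≥0∞) (f : ℝ × ℝ → ℝ≥0∞) (w : ℝ × ℝ) : ℝ≥0∞ :=
  maximalFst c (f ∘ Prod.swap) w.swap

variable {c : ℝ≥0∞} {f : ℝ × ℝ → ℝ≥0∞}

theorem measurable_maximalFst (hf : Measurable f) : Measurable (maximalFst c f) := by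
  refine (Measurable.iSup fun n => ?_).const_mul c
  refine Measurable.lintegral_prod_right' (f := fun q : (ℝ × ℝ) × ℝ =>
    halfPlanePoisson (1 / ((n : ℝ) + 1)) (q.1.1 - q.2) * f (q.2, q.1.2)) ?_
  exact (measurable_halfPlanePoisson.comp
    (f := fun q : (ℝ × ℝ) × ℝ => (1 / ((n : ℝ) + 1), q.1.1 - q.2)) (by fun_prop)).mul (by fun_prop)

theorem measurable_maximalSnd (hf : Measurable f) : Measurable (maximalSnd c f) :=
  (measurable_maximalFst (hf.comp measurable_swap)).comp measurable_swap

theorem lintegral_sq_maximalFst_le (hf : Measurable f) :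
    ∫⁻ w, maximalFst c f w ^ 2 ≤ (c * (8 * ENNReal.ofReal Real.pi)) ^ 2 * ∫⁻ w, f w ^ 2 := by
  rw [Measure.volume_eq_prod, lintegral_prod_symm' _ ((measurable_maximalFst hf).pow_const 2),
    lintegral_prod_symm' _ (hf.pow_const 2),
    ← lintegral_const_mul _ (Measurable.lintegral_prod_left' (hf.pow_const 2))]
  refine lintegral_mono fun v => ?_
  have hmeas : Measurable (poissonMaximal fun u => f (u, v)) := by
    simpa [maximalFst, Function.comp_def] using
      (measurable_maximalFst (c := 1) hf).comp (measurable_prodMk_right (y := v))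
  simp only [maximalFst, mul_pow c]
  rw [lintegral_const_mul _ (hmeas.pow_const 2), mul_assoc]
  exact mul_le_mul_right (lintegral_sq_poissonMaximal_le (f := fun u => f (u, v)) (by fun_prop)) _

theorem lintegral_sq_maximalSnd_le (hf : Measurable f) :
    ∫⁻ w, maximalSnd c f w ^ 2 ≤ (c * (8 * ENNReal.ofReal Real.pi)) ^ 2 * ∫⁻ w, f w ^ 2 := by
  have hswap (F : ℝ × ℝ → ℝ≥0∞) : ∫⁻ w, F (Prod.swap w) = ∫⁻ w, F w := by
    simpa only [Measure.volume_eq_prod] using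
      Measure.measurePreserving_swap.lintegral_comp_emb
        MeasurableEquiv.prodComm.measurableEmbedding F
  have h := lintegral_sq_maximalFst_le (c := c) (hf.comp measurable_swap)
  rw [← hswap] at h
  exact h.trans_eq (congrArg _ (hswap fun w => f w ^ 2))

end DirectionalMaximal

section FourierMultiplier

variable {χ : ℝ → ℂ}

theorem norm_exp_I_mul_ofReal_mul_ofReal (u ξ : ℝ) : ‖Complex.exp (-Complex.I * (u * ξ))‖ = 1 := by
  rw [← Complex.norm_exp_ofReal_mul_I (-(u * ξ))]
  congr 2; push_cast; ring

theorem norm_fourierTransform1_le (χ : ℝ → ℂ) (ξ : ℝ) :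
    ‖fourierTransform1 χ ξ‖ ≤ ∫ u, ‖χ u‖ := by
  refine (norm_integral_le_integral_norm _).trans_eq (integral_congr_ae (.of_forall fun u => ?_))
  simp only [norm_mul, norm_exp_I_mul_ofReal_mul_ofReal, one_mul]

theorem continuous_fourierTransform1 (hχ : Integrable χ) : Continuous (fourierTransform1 χ) := by
  refine continuous_of_dominated (bound := fun u => ‖χ u‖) (fun ξ => ?_) (fun ξ => ?_) hχ.norm
    (.of_forall fun u => by fun_prop)
  · exact Continuous.aestronglyMeasurable (by fun_prop) |>.mul hχ.1
  · refine .of_forall fun u => ?_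
    rw [norm_mul, norm_exp_I_mul_ofReal_mul_ofReal, one_mul]

theorem integrable_mul_fourierTransform1 (hχ : Integrable χ) {h : ℝ × ℝ → ℂ} (hh : Integrable h)
    {l : ℝ × ℝ → ℝ} (hl : Continuous l) : Integrable fun ζ => h ζ * fourierTransform1 χ (l ζ) :=
  hh.mul_bdd ((continuous_fourierTransform1 hχ).comp hl).aestronglyMeasurable
    (.of_forall fun _ => norm_fourierTransform1_le χ _)

theorem norm_exp_I_mul_add (ζ w : ℝ × ℝ) :
    ‖Complex.exp (Complex.I * (ζ.1 * w.1 + ζ.2 * w.2))‖ = 1 := by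
  rw [← Complex.norm_exp_ofReal_mul_I (ζ.1 * w.1 + ζ.2 * w.2)]
  congr 2; push_cast; ring

/-- Multiplication by `χ̂(eζ₁)` becomes averaging against `χ` at scale `e` in the dual variable. -/
theorem fourierTransform2_mul_fourierTransform1_fst (hχ : Integrable χ) {h : ℝ × ℝ → ℂ}
    (hh : Integrable h) (e : ℝ) (w : ℝ × ℝ) :
    fourierTransform2 (fun ζ => h ζ * fourierTransform1 χ (e * ζ.1)) w =
      ∫ u, χ u * fourierTransform2 h (w.1 - e * u, w.2) := by
  let F : ℝ × ℝ → ℝ → ℂ := fun ζ u =>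
    h ζ * χ u * Complex.exp (Complex.I * (ζ.1 * ((w.1 - e * u : ℝ) : ℂ) + ζ.2 * w.2))
  have hF : Integrable (Function.uncurry F) :=
    (hh.mul_prod hχ).mul_bdd (c := 1) (Continuous.aestronglyMeasurable (by fun_prop))
      (.of_forall fun q => (norm_exp_I_mul_add q.1 (w.1 - e * q.2, w.2)).le)
  calc fourierTransform2 (fun ζ => h ζ * fourierTransform1 χ (e * ζ.1)) w
      = ∫ ζ, ∫ u, F ζ u := by
        refine integral_congr_ae (.of_forall fun ζ => ?_)
        simp only [fourierTransform1, F]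
        rw [← integral_const_mul, ← integral_const_mul]
        refine integral_congr_ae (.of_forall fun u => ?_)
        have hexp : Complex.exp (Complex.I * (ζ.1 * ((w.1 - e * u : ℝ) : ℂ) + ζ.2 * w.2)) =
            Complex.exp (Complex.I * (ζ.1 * w.1 + ζ.2 * w.2)) *
              Complex.exp (-Complex.I * (u * ((e * ζ.1 : ℝ) : ℂ))) := by
          rw [← Complex.exp_add]
          congr 1; push_cast; ring
        simp only [hexp]
        ring
    _ = ∫ u, ∫ ζ, F ζ u := integral_integral_swap hF
    _ = ∫ u, χ u * fourierTransform2 h (w.1 - e * u, w.2) := by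
        refine integral_congr_ae (.of_forall fun u => ?_)
        simp only [fourierTransform2, F]
        rw [← integral_const_mul]
        exact integral_congr_ae (.of_forall fun ζ => by ring)

theorem fourierTransform2_comp_swap (h : ℝ × ℝ → ℂ) (w : ℝ × ℝ) :
    fourierTransform2 (h ∘ Prod.swap) w.swap = fourierTransform2 h w := by
  simp only [fourierTransform2]
  rw [Measure.volume_eq_prod, ← integral_prod_swap]
  exact integral_congr_ae (.of_forall fun ζ => by simp [add_comm])

variable {A : ℝ} {f : ℝ × ℝ → ℝ≥0∞} {h : ℝ × ℝ → ℂ} {e : ℝ}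

theorem enorm_fourierTransform2_mul_fst_le (hχ : Integrable χ)
    (hχA : ∀ u, ‖χ u‖ ≤ A / (1 + u ^ 2)) (hh : Integrable h)
    (hhf : ∀ w, ‖fourierTransform2 h w‖ₑ ≤ f w) (he : e ∈ Ioo (0 : ℝ) 1) (w : ℝ × ℝ) :
    ‖fourierTransform2 (fun ζ => h ζ * fourierTransform1 χ (e * ζ.1)) w‖ₑ ≤
      maximalFst (ENNReal.ofReal (2 * A)) f w := by
  rw [fourierTransform2_mul_fourierTransform1_fst hχ hh]
  calc ‖∫ u, χ u * fourierTransform2 h (w.1 - e * u, w.2)‖ₑ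
      ≤ ∫⁻ u, ‖χ u‖ₑ * f (w.1 - e * u, w.2) :=
        (enorm_integral_le_lintegral_enorm _).trans (lintegral_mono fun u => by
          rw [enorm_mul]
          exact mul_le_mul_right (hhf _) _)
    _ ≤ maximalFst (ENNReal.ofReal (2 * A)) f w :=
        lintegral_mul_dilate_le_poissonMaximal (f := fun u => f (u, w.2))
          (fun u => (ofReal_norm (χ u)).symm.trans_le (ofReal_le_ofReal (hχA u))) he w.1

theorem enorm_fourierTransform2_mul_snd_le (hχ : Integrable χ)
    (hχA : ∀ u, ‖χ u‖ ≤ A / (1 + u ^ 2)) (hh : Integrable h)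
    (hhf : ∀ w, ‖fourierTransform2 h w‖ₑ ≤ f w) (he : e ∈ Ioo (0 : ℝ) 1) (w : ℝ × ℝ) :
    ‖fourierTransform2 (fun ζ => h ζ * fourierTransform1 χ (e * ζ.2)) w‖ₑ ≤
      maximalSnd (ENNReal.ofReal (2 * A)) f w := by
  rw [← fourierTransform2_comp_swap]
  refine enorm_fourierTransform2_mul_fst_le hχ hχA (h := h ∘ Prod.swap) (f := f ∘ Prod.swap)
    hh.swap (fun w => ?_) he w.swap
  rw [← fourierTransform2_comp_swap, Function.comp_assoc, Prod.swap_swap_eq]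
  exact hhf _

end FourierMultiplier

section Interpolation

theorem lintegral_Ioc_rpow {a : ℝ} (ha : -1 < a) {L : ℝ} (hL : 0 ≤ L) :
    ∫⁻ t in Ioc 0 L, ENNReal.ofReal (t ^ a) = ENNReal.ofReal (L ^ (a + 1) / (a + 1)) := by
  have hint := intervalIntegral.intervalIntegrable_rpow' (a := 0) (b := L) ha
  rw [intervalIntegrable_iff_integrableOn_Ioc_of_le hL] at hint
  rw [← ofReal_integral_eq_lintegral_ofReal hint, ← intervalIntegral.integral_of_le hL,
    integral_rpow (.inl ha), Real.zero_rpow (by linarith), sub_zero]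
  filter_upwards [ae_restrict_mem measurableSet_Ioc] with t ht using Real.rpow_nonneg ht.1.le _

variable {X Z : Type*} [MeasurableSpace X] [MeasurableSpace Z] {m : Measure X} {ν : Measure Z}
  {s r : ℝ}

theorem enorm_integral_indicator_mul_le {Φ : X → ℂ} {B : ℝ} (hΦ_le : ∀ x, ‖Φ x‖ ≤ B) {G : X → ℂ}
    (hG : Measurable G) {M t : ℝ} (hM : 0 < M) (ht : 0 < t) :
    ‖∫ x, {x | t * ‖G x‖ ^ (r - 1) ≤ M}ᶜ.indicator G x * Φ x ∂m‖ₑ ≤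
      ENNReal.ofReal (B * (t / M)) * ∫⁻ x, ‖G x‖ₑ ^ r ∂m := by
  rw [← lintegral_const_mul _ (by fun_prop)]
  refine (enorm_integral_le_lintegral_enorm _).trans (lintegral_mono fun x => ?_)
  by_cases hx : t * ‖G x‖ ^ (r - 1) ≤ M
  · simp [hx]
  have hB : 0 ≤ B := (norm_nonneg _).trans (hΦ_le x)
  rw [indicator_of_mem (by exact hx)]
  rcases (norm_nonneg (G x)).eq_or_lt with hG0 | hG0
  · simp [norm_eq_zero.1 hG0.symm]
  rw [← ofReal_norm, ← ofReal_norm, ofReal_rpow_of_pos hG0, ← ofReal_mul (by positivity), norm_mul]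
  refine ofReal_le_ofReal ?_
  have hlow : 1 ≤ t / M * ‖G x‖ ^ (r - 1) := by
    rw [div_mul_eq_mul_div, one_le_div hM]
    exact (not_le.1 hx).le
  calc ‖G x‖ * ‖Φ x‖ ≤ t / M * ‖G x‖ ^ (r - 1) * ‖G x‖ * B := by
        gcongr
        · exact le_mul_of_one_le_left hG0.le hlow
        · exact hΦ_le x
    _ = B * (t / M) * ‖G x‖ ^ r := by
        rw [mul_assoc (t / M), ← Real.rpow_add_one hG0.ne', sub_add_cancel]; ring

theorem lintegral_truncation_le (hsr : s.HolderConjugate r) (hs : 2 < s) {u : ℝ} (hu : 0 ≤ u)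
    {M : ℝ} (hM : 0 ≤ M) :
    ∫⁻ t in Ioi 0, ENNReal.ofReal (t ^ (s - 3)) *
        {t : ℝ | t * u ^ (r - 1) ≤ M}.indicator (fun _ => ENNReal.ofReal u ^ 2) t ≤
      ENNReal.ofReal (M ^ (s - 2) / (s - 2)) * ENNReal.ofReal u ^ r := by
  rcases hu.eq_or_lt with rfl | hu
  · simp
  have hset : {t : ℝ | t * u ^ (r - 1) ≤ M} = Iic (M * u ^ (1 - r)) := by
    ext t
    rw [mem_ofPred_eq, mem_Iic, ← neg_sub r 1, Real.rpow_neg hu.le, ← div_eq_mul_inv,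
      le_div_iff₀ (by positivity)]
  have hexp : (1 - r) * (s - 2) + 2 = r := by
    linear_combination -hsr.sub_one_mul_conj
  rw [hset]
  refine le_of_eq ?_
  calc ∫⁻ t in Ioi 0, ENNReal.ofReal (t ^ (s - 3)) *
        (Iic (M * u ^ (1 - r))).indicator (fun _ => ENNReal.ofReal u ^ 2) t
      = ∫⁻ t in Ioi 0, (Iic (M * u ^ (1 - r))).indicator
          (fun t => ENNReal.ofReal (t ^ (s - 3)) * ENNReal.ofReal u ^ 2) t := by
        simp only [indicator_mul_right]
    _ = ENNReal.ofReal ((M * u ^ (1 - r)) ^ (s - 2) / (s - 2)) * ENNReal.ofReal u ^ 2 := by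
        rw [setLIntegral_indicator measurableSet_Iic, inter_comm, Ioi_inter_Iic,
          lintegral_mul_const _ (by fun_prop), lintegral_Ioc_rpow (by linarith) (by positivity),
          show s - 3 + 1 = s - 2 by ring]
    _ = ENNReal.ofReal (M ^ (s - 2) / (s - 2) * u ^ r) := by
        rw [← ofReal_pow hu.le, ← ofReal_mul (div_nonneg (by positivity) (by linarith)),
          Real.mul_rpow hM (by positivity), ← Real.rpow_mul hu.le, ← Real.rpow_natCast u 2,
          div_mul_eq_mul_div, mul_assoc, ← Real.rpow_add hu, Nat.cast_ofNat, hexp,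
          ← div_mul_eq_mul_div]
    _ = ENNReal.ofReal (M ^ (s - 2) / (s - 2)) * ENNReal.ofReal u ^ r := by
        rw [ofReal_mul (div_nonneg (by positivity) (by linarith)), ofReal_rpow_of_pos hu]

theorem lintegral_lintegral_truncation_le [SFinite m] (hsr : s.HolderConjugate r) (hs : 2 < s)
    {G : X → ℂ} (hG : Measurable G) {M : ℝ} (hM : 0 ≤ M) :
    ∫⁻ t in Ioi 0, ENNReal.ofReal (t ^ (s - 3)) *
        ∫⁻ x in {x | t * ‖G x‖ ^ (r - 1) ≤ M}, ‖G x‖ₑ ^ 2 ∂m ≤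
      ENNReal.ofReal (M ^ (s - 2) / (s - 2)) * ∫⁻ x, ‖G x‖ₑ ^ r ∂m := by
  let S : Set (ℝ × X) := {q | q.1 * ‖G q.2‖ ^ (r - 1) ≤ M}
  have hS : MeasurableSet S := measurableSet_le (by fun_prop) measurable_const
  let F : ℝ → X → ℝ≥0∞ := fun t x =>
    ENNReal.ofReal (t ^ (s - 3)) * S.indicator (fun q => ENNReal.ofReal ‖G q.2‖ ^ 2) (t, x)
  have hF : Measurable (Function.uncurry F) :=
    Measurable.mul (by fun_prop) (Measurable.indicator (by fun_prop) hS)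
  calc ∫⁻ t in Ioi 0, ENNReal.ofReal (t ^ (s - 3)) *
        ∫⁻ x in {x | t * ‖G x‖ ^ (r - 1) ≤ M}, ‖G x‖ₑ ^ 2 ∂m
      = ∫⁻ t in Ioi 0, ∫⁻ x, F t x ∂m := by
        refine lintegral_congr fun t => ?_
        have hSt : MeasurableSet {x | t * ‖G x‖ ^ (r - 1) ≤ M} := measurable_prodMk_left hS
        rw [lintegral_const_mul' _ _ ofReal_ne_top, ← lintegral_indicator hSt]
        simp only [← ofReal_norm]
        rfl
    _ = ∫⁻ x, (∫⁻ t in Ioi (0 : ℝ), F t x) ∂m := lintegral_lintegral_swap hF.aemeasurable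
    _ ≤ ∫⁻ x, ENNReal.ofReal (M ^ (s - 2) / (s - 2)) * ‖G x‖ₑ ^ r ∂m :=
        lintegral_mono fun x => by
          rw [← ofReal_norm]
          exact lintegral_truncation_le hsr hs (norm_nonneg (G x)) hM
    _ = ENNReal.ofReal (M ^ (s - 2) / (s - 2)) * ∫⁻ x, ‖G x‖ₑ ^ r ∂m :=
        lintegral_const_mul _ (by fun_prop)

theorem integral_mul_eq_zero_of_lintegral_rpow_eq_zero (hr : 0 < r) {G : X → ℂ}
    (hG : Measurable G) (h0 : ∫⁻ x, ‖G x‖ₑ ^ r ∂m = 0) (Φ : X → ℂ) :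
    ∫ x, G x * Φ x ∂m = 0 := by
  rw [lintegral_eq_zero_iff (by fun_prop)] at h0
  refine integral_eq_zero_of_ae ?_
  filter_upwards [h0] with x hx
  have : G x = 0 := by simpa [ENNReal.rpow_eq_zero_iff, hr, hr.not_gt] using hx
  simp [this]

variable {Φ : X → Z → ℂ} {B : ℝ} {K : ℝ≥0}

theorem measurable_integral_mul_kernel [SFinite m] (hΦ : Measurable (Function.uncurry Φ))
    {G : X → ℂ} (hG : Measurable G) : Measurable fun z => ∫ x, G x * Φ x z ∂m :=
  ((hG.comp measurable_fst).mul hΦ).stronglyMeasurable.integral_prod_left'.measurable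

theorem sq_mul_measure_lt_norm_integral_le [SFinite m] (hΦ : Measurable (Function.uncurry Φ))
    (hΦ_le : ∀ x z, ‖Φ x z‖ ≤ B) (hB : 0 < B)
    (hL2 : ∀ G : X → ℂ, Measurable G → Integrable G m →
      ∫⁻ z, ‖∫ x, G x * Φ x z ∂m‖ₑ ^ 2 ∂ν ≤ K * ∫⁻ x, ‖G x‖ₑ ^ 2 ∂m)
    {G : X → ℂ} (hG : Measurable G) (hG_int : Integrable G m) {N : ℝ} (hN : 0 < N)
    (hGN : ∫⁻ x, ‖G x‖ₑ ^ r ∂m = ENNReal.ofReal N) {t : ℝ} (ht : 0 < t) :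
    ENNReal.ofReal (t / 2) ^ 2 * ν {z | t < ‖∫ x, G x * Φ x z ∂m‖} ≤
      K * ∫⁻ x in {x | t * ‖G x‖ ^ (r - 1) ≤ 2 * B * N}, ‖G x‖ₑ ^ 2 ∂m := by
  set S : Set X := {x | t * ‖G x‖ ^ (r - 1) ≤ 2 * B * N}
  have hS : MeasurableSet S := measurableSet_le (by fun_prop) measurable_const
  have hint (A : Set X) (hA : MeasurableSet A) (z : Z) :
      Integrable (fun x => A.indicator G x * Φ x z) m :=
    (hG_int.indicator hA).mul_bdd (hΦ.comp measurable_prodMk_right).aestronglyMeasurable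
      (.of_forall fun x => hΦ_le x z)
  have hhigh (z : Z) : ‖∫ x, Sᶜ.indicator G x * Φ x z ∂m‖ ≤ t / 2 := by
    have h := enorm_integral_indicator_mul_le (m := m) (r := r) (fun x => hΦ_le x z) hG
      (by positivity : 0 < 2 * B * N) ht
    rw [hGN, ← ofReal_mul (by positivity), ← ofReal_norm,
      ofReal_le_ofReal_iff (by positivity)] at h
    exact h.trans_eq (by field_simp)
  have hsub : {z | t < ‖∫ x, G x * Φ x z ∂m‖} ⊆
      {z | ENNReal.ofReal (t / 2) ^ 2 ≤ ‖∫ x, S.indicator G x * Φ x z ∂m‖ₑ ^ 2} := by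
    intro z hz
    have hsplit : ∫ x, G x * Φ x z ∂m =
        (∫ x, S.indicator G x * Φ x z ∂m) + ∫ x, Sᶜ.indicator G x * Φ x z ∂m := by
      rw [← integral_add (hint S hS z) (hint Sᶜ hS.compl z)]
      exact integral_congr_ae (.of_forall fun x => by
        simp only [← add_mul, ← indicator_self_add_compl_apply S G x])
    have hlow : t / 2 ≤ ‖∫ x, S.indicator G x * Φ x z ∂m‖ := by
      have := norm_add_le (∫ x, S.indicator G x * Φ x z ∂m) (∫ x, Sᶜ.indicator G x * Φ x z ∂m)
      rw [← hsplit] at this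
      linarith [hhigh z, hz.out]
    rw [mem_ofPred_eq, ← ofReal_norm]
    gcongr
  calc ENNReal.ofReal (t / 2) ^ 2 * ν {z | t < ‖∫ x, G x * Φ x z ∂m‖}
      ≤ ∫⁻ z, ‖∫ x, S.indicator G x * Φ x z ∂m‖ₑ ^ 2 ∂ν :=
        (mul_le_mul_right (measure_mono hsub) _).trans (mul_meas_ge_le_lintegral
          ((measurable_integral_mul_kernel hΦ (hG.indicator hS)).enorm.pow_const 2) _)
    _ ≤ K * ∫⁻ x, ‖S.indicator G x‖ₑ ^ 2 ∂m := hL2 _ (hG.indicator hS) (hG_int.indicator hS)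
    _ = K * ∫⁻ x in S, ‖G x‖ₑ ^ 2 ∂m := by
        rw [← lintegral_indicator hS]
        congr! 3 with x
        by_cases hx : x ∈ S <;> simp [hx]

theorem measure_lt_norm_integral_mul_rpow_le [SFinite m] (hΦ : Measurable (Function.uncurry Φ))
    (hΦ_le : ∀ x z, ‖Φ x z‖ ≤ B) (hB : 0 < B)
    (hL2 : ∀ G : X → ℂ, Measurable G → Integrable G m →
      ∫⁻ z, ‖∫ x, G x * Φ x z ∂m‖ₑ ^ 2 ∂ν ≤ K * ∫⁻ x, ‖G x‖ₑ ^ 2 ∂m)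
    {G : X → ℂ} (hG : Measurable G) (hG_int : Integrable G m) {N : ℝ} (hN : 0 < N)
    (hGN : ∫⁻ x, ‖G x‖ₑ ^ r ∂m = ENNReal.ofReal N) {t : ℝ} (ht : 0 < t) (s : ℝ) :
    ν {z | t < ‖∫ x, G x * Φ x z ∂m‖} * ENNReal.ofReal (t ^ (s - 1)) ≤
      4 * K * (ENNReal.ofReal (t ^ (s - 3)) *
        ∫⁻ x in {x | t * ‖G x‖ ^ (r - 1) ≤ 2 * B * N}, ‖G x‖ₑ ^ 2 ∂m) := by
  have hpow : ENNReal.ofReal (t ^ (s - 1)) =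
      4 * ENNReal.ofReal (t ^ (s - 3)) * ENNReal.ofReal (t / 2) ^ 2 := by
    rw [← ofReal_pow (by positivity), ← ofReal_ofNat 4, ← ofReal_mul (by positivity),
      ← ofReal_mul (by positivity), show s - 1 = s - 3 + (2 : ℕ) by push_cast; ring,
      Real.rpow_add_natCast ht.ne']
    congr 1
    ring
  rw [hpow, mul_comm (ν _), mul_assoc, mul_assoc 4 (K : ℝ≥0∞), mul_left_comm (K : ℝ≥0∞),
    mul_assoc 4]
  exact mul_le_mul_right (mul_le_mul_right
    (sq_mul_measure_lt_norm_integral_le hΦ hΦ_le hB hL2 hG hG_int hN hGN ht) _) _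

/-- Marcinkiewicz interpolation: at height `t` the function `G` is cut where `t ‖G‖ ^ (r - 1)`
exceeds `2BN`, so that the part above the cut contributes at most `t / 2`. -/
theorem lintegral_rpow_enorm_integral_mul_le [SFinite m] (hΦ : Measurable (Function.uncurry Φ))
    (hΦ_le : ∀ x z, ‖Φ x z‖ ≤ B) (hB : 0 < B)
    (hL2 : ∀ G : X → ℂ, Measurable G → Integrable G m →
      ∫⁻ z, ‖∫ x, G x * Φ x z ∂m‖ₑ ^ 2 ∂ν ≤ K * ∫⁻ x, ‖G x‖ₑ ^ 2 ∂m) (hK : K ≠ 0)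
    (hsr : s.HolderConjugate r) (hs : 2 < s) {G : X → ℂ} (hG : Measurable G)
    (hG_int : Integrable G m) :
    ∫⁻ z, ‖∫ x, G x * Φ x z ∂m‖ₑ ^ s ∂ν ≤
      ENNReal.ofReal (s * 4 * ((2 * B) ^ (s - 2) / (s - 2))) * K *
        (∫⁻ x, ‖G x‖ₑ ^ r ∂m) ^ (s - 1) := by
  have hs1 : 0 < s - 1 := by linarith
  have hs0 : 0 < s := by linarith
  rcases eq_or_ne (∫⁻ x, ‖G x‖ₑ ^ r ∂m) 0 with h0 | h0
  · simp [integral_mul_eq_zero_of_lintegral_rpow_eq_zero hsr.symm.pos hG h0, hs0]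
  rcases eq_or_ne (∫⁻ x, ‖G x‖ₑ ^ r ∂m) ∞ with htop | htop
  · rw [htop, top_rpow_of_pos hs1, mul_top (mul_ne_zero (ofReal_pos.2 (by positivity)).ne'
      (coe_ne_zero.2 hK))]
    exact le_top
  obtain ⟨N, hN, hGN⟩ : ∃ N : ℝ, 0 < N ∧ ∫⁻ x, ‖G x‖ₑ ^ r ∂m = ENNReal.ofReal N :=
    ⟨_, toReal_pos h0 htop, (ofReal_toReal htop).symm⟩
  set E : Z → ℂ := fun z => ∫ x, G x * Φ x z ∂m
  have hE : Measurable E := measurable_integral_mul_kernel hΦ hG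
  calc ∫⁻ z, ‖E z‖ₑ ^ s ∂ν
      = ENNReal.ofReal s * ∫⁻ t in Ioi 0, ν {z | t < ‖E z‖} * ENNReal.ofReal (t ^ (s - 1)) := by
        rw [← lintegral_rpow_eq_lintegral_meas_lt_mul ν (.of_forall fun z => norm_nonneg _)
          hE.norm.aemeasurable hs0]
        refine lintegral_congr fun z => ?_
        rw [← ofReal_norm, ofReal_rpow_of_nonneg (norm_nonneg _) hs0.le]
    _ ≤ ENNReal.ofReal s * (4 * K * ∫⁻ t in Ioi 0, ENNReal.ofReal (t ^ (s - 3)) *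
          ∫⁻ x in {x | t * ‖G x‖ ^ (r - 1) ≤ 2 * B * N}, ‖G x‖ₑ ^ 2 ∂m) := by
        rw [← lintegral_const_mul' _ _ (mul_ne_top ofNat_ne_top coe_ne_top)]
        exact mul_le_mul_right (setLIntegral_mono' measurableSet_Ioi fun t ht =>
          measure_lt_norm_integral_mul_rpow_le hΦ hΦ_le hB hL2 hG hG_int hN hGN ht s) _
    _ ≤ ENNReal.ofReal s * (4 * K *
          (ENNReal.ofReal ((2 * B * N) ^ (s - 2) / (s - 2)) * ENNReal.ofReal N)) := by
        rw [← hGN]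
        exact mul_le_mul_right (mul_le_mul_right
          (lintegral_lintegral_truncation_le hsr hs hG (by positivity)) _) _
    _ = ENNReal.ofReal (s * 4 * ((2 * B) ^ (s - 2) / (s - 2))) * K *
          ENNReal.ofReal N ^ (s - 1) := by
        have hNpow : (2 * B * N) ^ (s - 2) / (s - 2) * N =
            (2 * B) ^ (s - 2) / (s - 2) * N ^ (s - 1) := by
          rw [Real.mul_rpow (by positivity) hN.le, show s - 1 = s - 2 + 1 by ring,
            Real.rpow_add_one hN.ne']
          ring
        rw [← ofReal_mul (by positivity), hNpow, ofReal_mul (by positivity),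
          ofReal_mul (by positivity), ofReal_mul hs0.le, ofReal_ofNat,
          ofReal_rpow_of_pos hN]
        ring
    _ = _ := by rw [hGN]

end Interpolation

section HardyLittlewoodSobolev

theorem lintegral_comp_abs (f : ℝ → ℝ≥0∞) :
    ∫⁻ x, f |x| = 2 * ∫⁻ x in Ioi 0, f x := by
  have hpos : ∫⁻ x in Ioi 0, f |x| = ∫⁻ x in Ioi 0, f x :=
    setLIntegral_congr_fun measurableSet_Ioi fun x hx => by rw [abs_of_pos hx]
  have hneg : ∫⁻ x in Iic 0, f |x| = ∫⁻ x in Ioi 0, f x := by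
    rw [← hpos, setLIntegral_congr (Iio_ae_eq_Iic (a := (0 : ℝ))).symm,
      ← lintegral_indicator measurableSet_Iio, ← lintegral_indicator measurableSet_Ioi,
      ← lintegral_neg_eq_self]
    refine lintegral_congr fun x => ?_
    simp [indicator_apply]
  rw [← setLIntegral_univ, ← Iic_union_Ioi (a := (0 : ℝ)),
    lintegral_union measurableSet_Ioi (Iic_disjoint_Ioi le_rfl), hneg, hpos, two_mul]

theorem lintegral_indicator_Iic_rpow_abs_sub {lam : ℝ} (hlam : lam < 1) {R : ℝ} (hR : 0 ≤ R)
    (c : ℝ) :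
    ∫⁻ t, (Iic R).indicator (fun v => ENNReal.ofReal (v ^ (-lam))) |c - t| =
      ENNReal.ofReal (2 / (1 - lam) * R ^ (1 - lam)) := by
  rw [lintegral_sub_left_eq_self
      (fun u => (Iic R).indicator (fun v => ENNReal.ofReal (v ^ (-lam))) |u|) c,
    lintegral_comp_abs,
    setLIntegral_indicator measurableSet_Iic, inter_comm, Ioi_inter_Iic,
    lintegral_Ioc_rpow (by linarith) hR, ← ofReal_ofNat 2, ← ofReal_mul zero_le_two]
  congr 1
  rw [neg_add_eq_sub]
  ring

theorem lintegral_indicator_Ioi_rpow_neg_two_abs_sub {R : ℝ} (hR : 0 < R) (c : ℝ) :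
    ∫⁻ t, (Ioi R).indicator (fun v => ENNReal.ofReal (v ^ (-2 : ℝ))) |c - t| =
      ENNReal.ofReal (2 / R) := by
  rw [lintegral_sub_left_eq_self
      (fun u => (Ioi R).indicator (fun v => ENNReal.ofReal (v ^ (-2 : ℝ))) |u|) c,
    lintegral_comp_abs,
    setLIntegral_indicator measurableSet_Ioi, Ioi_inter_Ioi, sup_of_le_left hR.le,
    ← ofReal_integral_eq_lintegral_ofReal (integrableOn_Ioi_rpow_of_lt (by norm_num) hR),
    integral_Ioi_rpow_of_lt (by norm_num) hR, ← ofReal_ofNat 2, ← ofReal_mul zero_le_two]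
  · rw [show (-2 : ℝ) + 1 = -1 by norm_num, Real.rpow_neg_one]
    congr 1
    ring
  · filter_upwards [ae_restrict_mem measurableSet_Ioi] with t ht
      using Real.rpow_nonneg (hR.trans ht).le _

variable {X : Type*} [MeasurableSpace X] {ν : Measure X}

theorem lintegral_lintegral_symm_le [SFinite ν] {k : X → X → ℝ≥0∞}
    (hk : Measurable (Function.uncurry k)) (hk_symm : ∀ x y, k x y = k y x) {f : X → ℝ≥0∞}
    (hf : Measurable f) :
    ∫⁻ x, ∫⁻ y, k x y ∂ν ∂ν ≤ 2 * ∫⁻ x, (∫⁻ y in {y | f y ≤ f x}, k x y ∂ν) ∂ν := by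
  let S : Set (X × X) := {w | f w.2 ≤ f w.1}
  have hS : MeasurableSet S := measurableSet_le (by fun_prop) (by fun_prop)
  let l : X → X → ℝ≥0∞ := fun x y => S.indicator (Function.uncurry k) (x, y)
  have hl : Measurable (Function.uncurry l) := hk.indicator hS
  have hl_set (x : X) : ∫⁻ y, l x y ∂ν = ∫⁻ y in {y | f y ≤ f x}, k x y ∂ν := by
    have hSx : MeasurableSet {y | f y ≤ f x} := measurable_prodMk_left hS
    rw [← lintegral_indicator hSx]
    rfl
  calc ∫⁻ x, ∫⁻ y, k x y ∂ν ∂ν ≤ ∫⁻ x, ∫⁻ y, (l x y + l y x) ∂ν ∂ν := by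
        refine lintegral_mono fun x => lintegral_mono fun y => ?_
        rcases le_total (f y) (f x) with h | h
        · exact le_add_right (by simp [l, S, h])
        · exact le_add_left (by simp [l, S, h, hk_symm x y])
    _ = ∫⁻ x, ∫⁻ y, l x y ∂ν ∂ν + ∫⁻ x, ∫⁻ y, l y x ∂ν ∂ν := by
        rw [← lintegral_add_left (f := fun x => ∫⁻ y, l x y ∂ν) hl.lintegral_prod_right']
        exact lintegral_congr fun x => lintegral_add_left hl.of_uncurry_left _
    _ = 2 * ∫⁻ x, (∫⁻ y in {y | f y ≤ f x}, k x y ∂ν) ∂ν := by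
        rw [lintegral_lintegral_swap (f := fun x y => l y x)
          (hl.comp measurable_swap).aemeasurable, ← two_mul]
        simp only [hl_set]

variable {ψ : X → ℝ}

theorem lintegral_comp_le_of_map_le (hψ : Measurable ψ) (hν : ν.map ψ ≤ volume) {f : ℝ → ℝ≥0∞}
    (hf : Measurable f) : ∫⁻ y, f (ψ y) ∂ν ≤ ∫⁻ t, f t :=
  (lintegral_map hf hψ).symm.trans_le (lintegral_mono' hν le_rfl)

variable {lam : ℝ} {f : X → ℝ≥0∞}

theorem lintegral_mul_indicator_Ioi_rpow_le (hψ : Measurable ψ) (hν : ν.map ψ ≤ volume)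
    (h0 : 0 < lam) (h1 : lam < 1) (hf : Measurable f) {R : ℝ} (hR : 0 < R) (c : ℝ) :
    ∫⁻ y, f y * (Ioi R).indicator (fun v => ENNReal.ofReal (v ^ (-lam))) |c - ψ y| ∂ν ≤
      (∫⁻ y, f y ^ (2 / (2 - lam)) ∂ν) ^ ((2 - lam) / 2) *
        ENNReal.ofReal (2 / R) ^ (lam / 2) := by
  have h2 : 0 < 2 - lam := by linarith
  have hconj : (2 / (2 - lam)).HolderConjugate (2 / lam) := by
    rw [Real.holderConjugate_iff]
    constructor
    · rw [lt_div_iff₀ h2]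
      linarith
    · field_simp
      ring
  have hmeas (e : ℝ) :
      Measurable fun t => (Ioi R).indicator (fun v => ENNReal.ofReal (v ^ e)) |c - t| :=
    Measurable.comp (g := (Ioi R).indicator fun v => ENNReal.ofReal (v ^ e))
      (Measurable.indicator (by fun_prop) measurableSet_Ioi) (by fun_prop)
  have hpow (t : ℝ) : (Ioi R).indicator (fun v => ENNReal.ofReal (v ^ (-lam))) t ^ (2 / lam) =
      (Ioi R).indicator (fun v => ENNReal.ofReal (v ^ (-2 : ℝ))) t := by
    by_cases ht : t ∈ Ioi R
    · have ht0 : 0 < t := hR.trans ht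
      rw [indicator_of_mem ht, indicator_of_mem ht, ofReal_rpow_of_pos (by positivity),
        ← Real.rpow_mul ht0.le]
      congr 2
      field_simp
    · rw [indicator_of_notMem ht, indicator_of_notMem ht, zero_rpow_of_pos (by positivity)]
  refine (ENNReal.lintegral_mul_le_Lp_mul_Lq ν hconj hf.aemeasurable
    ((hmeas (-lam)).comp hψ).aemeasurable).trans ?_
  simp only [Function.comp_def, hpow, one_div_div]
  gcongr
  exact (lintegral_comp_le_of_map_le hψ hν (hmeas (-2))).trans_eq
    (lintegral_indicator_Ioi_rpow_neg_two_abs_sub hR c)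

theorem mul_div_rpow_one_sub_eq (h1 : lam < 1) {A N : ℝ} (hA : 0 < A) (hN : 0 < N) :
    A * (N / A ^ (2 / (2 - lam))) ^ (1 - lam) = N ^ (1 - lam) * A ^ (lam / (2 - lam)) := by
  have h2 : 2 - lam ≠ 0 := by linarith
  rw [Real.div_rpow hN.le (by positivity), ← Real.rpow_mul hA.le,
    show lam / (2 - lam) = 1 - 2 / (2 - lam) * (1 - lam) by field_simp; ring,
    Real.rpow_sub hA, Real.rpow_one]
  ring

theorem rpow_mul_two_div_rpow_eq (h1 : lam < 1) {A N : ℝ} (hA : 0 < A) (hN : 0 < N) :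
    N ^ ((2 - lam) / 2) * (2 / (N / A ^ (2 / (2 - lam)))) ^ (lam / 2) =
      2 ^ (lam / 2) * N ^ (1 - lam) * A ^ (lam / (2 - lam)) := by
  have h2 : 2 - lam ≠ 0 := by linarith
  rw [div_div_eq_mul_div, Real.div_rpow (by positivity) hN.le,
    Real.mul_rpow zero_le_two (by positivity), ← Real.rpow_mul hA.le,
    show 2 / (2 - lam) * (lam / 2) = lam / (2 - lam) by field_simp,
    show 1 - lam = (2 - lam) / 2 - lam / 2 by ring, Real.rpow_sub hN]
  ring

/-- Split at the distance `R` at which the near and far contributions balance. -/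
theorem setLIntegral_le_mul_rpow_abs_sub_le (hψ : Measurable ψ) (hν : ν.map ψ ≤ volume)
    (h0 : 0 < lam) (h1 : lam < 1) (hf : Measurable f) {N : ℝ} (hN : 0 < N)
    (hfN : ∫⁻ y, f y ^ (2 / (2 - lam)) ∂ν = ENNReal.ofReal N) {A : ℝ} (hA : 0 < A) (c : ℝ) :
    ∫⁻ y in {y | f y ≤ ENNReal.ofReal A}, f y * ENNReal.ofReal (|c - ψ y| ^ (-lam)) ∂ν ≤
      ENNReal.ofReal ((2 / (1 - lam) + 2 ^ (lam / 2)) * N ^ (1 - lam) *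
        A ^ (lam / (2 - lam))) := by
  set R : ℝ := N / A ^ (2 / (2 - lam))
  have hR : 0 < R := by positivity
  let near : ℝ → ℝ≥0∞ := (Iic R).indicator fun v => ENNReal.ofReal (v ^ (-lam))
  let far : ℝ → ℝ≥0∞ := (Ioi R).indicator fun v => ENNReal.ofReal (v ^ (-lam))
  have hnear : Measurable fun t => near |c - t| :=
    Measurable.comp (g := near) (Measurable.indicator (by fun_prop) measurableSet_Iic)
      (by fun_prop)
  calc ∫⁻ y in {y | f y ≤ ENNReal.ofReal A}, f y * ENNReal.ofReal (|c - ψ y| ^ (-lam)) ∂ν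
      ≤ ∫⁻ y in {y | f y ≤ ENNReal.ofReal A},
          (ENNReal.ofReal A * near |c - ψ y| + f y * far |c - ψ y|) ∂ν := by
        refine setLIntegral_mono' (measurableSet_le hf measurable_const) fun y hy => ?_
        rcases le_or_gt |c - ψ y| R with h | h
        · refine le_add_right ?_
          rw [show near |c - ψ y| = _ from indicator_of_mem (by exact h) _]
          exact mul_le_mul_left hy _
        · refine le_add_left ?_
          rw [show far |c - ψ y| = _ from indicator_of_mem (by exact h) _]
    _ ≤ ∫⁻ y, (ENNReal.ofReal A * near |c - ψ y| + f y * far |c - ψ y|) ∂ν :=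
        setLIntegral_le_lintegral _ _
    _ = ENNReal.ofReal A * ∫⁻ y, near |c - ψ y| ∂ν + ∫⁻ y, f y * far |c - ψ y| ∂ν := by
        have hnear_comp : Measurable fun y => near |c - ψ y| := hnear.comp hψ
        rw [lintegral_add_left (hnear_comp.const_mul _), lintegral_const_mul _ hnear_comp]
    _ ≤ ENNReal.ofReal A * ENNReal.ofReal (2 / (1 - lam) * R ^ (1 - lam)) +
          ENNReal.ofReal N ^ ((2 - lam) / 2) * ENNReal.ofReal (2 / R) ^ (lam / 2) :=
        add_le_add (mul_le_mul_right ((lintegral_comp_le_of_map_le hψ hν hnear).trans_eq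
          (lintegral_indicator_Iic_rpow_abs_sub h1 hR.le c)) _)
          (hfN ▸ lintegral_mul_indicator_Ioi_rpow_le hψ hν h0 h1 hf hR c)
    _ = _ := by
        rw [ofReal_rpow_of_pos hN, ofReal_rpow_of_pos (by positivity),
          ← ofReal_mul (by positivity), ← ofReal_mul (by positivity),
          rpow_mul_two_div_rpow_eq h1 hA hN, ← ofReal_add (by positivity) (by positivity),
          mul_left_comm A, mul_div_rpow_one_sub_eq h1 hA hN]
        congr 1
        ring

theorem mul_setLIntegral_le_mul_rpow_abs_sub_le (hψ : Measurable ψ) (hν : ν.map ψ ≤ volume)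
    (h0 : 0 < lam) (h1 : lam < 1) (hf : Measurable f) {N : ℝ} (hN : 0 < N)
    (hfN : ∫⁻ y, f y ^ (2 / (2 - lam)) ∂ν = ENNReal.ofReal N) {A : ℝ≥0∞} (hA : A ≠ ∞) (c : ℝ) :
    A * ∫⁻ y in {y | f y ≤ A}, f y * ENNReal.ofReal (|c - ψ y| ^ (-lam)) ∂ν ≤
      ENNReal.ofReal ((2 / (1 - lam) + 2 ^ (lam / 2)) * N ^ (1 - lam)) *
        A ^ (2 / (2 - lam)) := by
  rcases eq_or_ne A 0 with rfl | hA0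
  · simp
  obtain ⟨a, ha, rfl⟩ : ∃ a : ℝ, 0 < a ∧ A = ENNReal.ofReal a :=
    ⟨_, toReal_pos hA0 hA, (ofReal_toReal hA).symm⟩
  have h2 : 2 - lam ≠ 0 := by linarith
  rw [show 2 / (2 - lam) = lam / (2 - lam) + 1 by field_simp; ring, ofReal_rpow_of_pos ha,
    Real.rpow_add_one ha.ne', ← ofReal_mul (by positivity), ← mul_assoc, mul_comm _ a,
    ofReal_mul ha.le]
  exact mul_le_mul_right (setLIntegral_le_mul_rpow_abs_sub_le hψ hν h0 h1 hf hN hfN ha c) _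

theorem lintegral_lintegral_mul_rpow_abs_sub_le [SFinite ν] (hψ : Measurable ψ)
    (hν : ν.map ψ ≤ volume) (h0 : 0 < lam) (h1 : lam < 1) (hf : Measurable f) :
    ∫⁻ x, ∫⁻ y, f x * f y * ENNReal.ofReal (|ψ x - ψ y| ^ (-lam)) ∂ν ∂ν ≤
      ENNReal.ofReal (2 * (2 / (1 - lam) + 2 ^ (lam / 2))) *
        (∫⁻ y, f y ^ (2 / (2 - lam)) ∂ν) ^ (2 - lam) := by
  have h2 : 0 < 2 - lam := by linarith
  have hp : 0 < 2 / (2 - lam) := by positivity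
  set C : ℝ := 2 / (1 - lam) + 2 ^ (lam / 2)
  rcases eq_or_ne (∫⁻ y, f y ^ (2 / (2 - lam)) ∂ν) ∞ with htop | htop
  · rw [htop, top_rpow_of_pos h2, mul_top (ofReal_pos.2 (by positivity)).ne']
    exact le_top
  rcases eq_or_ne (∫⁻ y, f y ^ (2 / (2 - lam)) ∂ν) 0 with hzero | hzero
  · rw [lintegral_eq_zero_iff (by fun_prop)] at hzero
    refine (lintegral_eq_zero_of_ae_eq_zero ?_).trans_le zero_le
    filter_upwards [hzero] with x hx
    have : f x = 0 := by simpa [ENNReal.rpow_eq_zero_iff, hp, hp.not_gt] using hx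
    simp [this]
  obtain ⟨N, hN, hfN⟩ : ∃ N : ℝ, 0 < N ∧ ∫⁻ y, f y ^ (2 / (2 - lam)) ∂ν = ENNReal.ofReal N :=
    ⟨_, toReal_pos hzero htop, (ofReal_toReal htop).symm⟩
  have hinner : ∀ᵐ x ∂ν,
      ∫⁻ y in {y | f y ≤ f x}, f x * f y * ENNReal.ofReal (|ψ x - ψ y| ^ (-lam)) ∂ν ≤
        ENNReal.ofReal (C * N ^ (1 - lam)) * f x ^ (2 / (2 - lam)) := by
    filter_upwards [ae_lt_top (by fun_prop) htop] with x hx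
    simp only [mul_assoc (f x)]
    rw [lintegral_const_mul _ (by fun_prop)]
    exact mul_setLIntegral_le_mul_rpow_abs_sub_le hψ hν h0 h1 hf hN hfN
      ((rpow_lt_top_iff_of_pos hp).1 hx).ne (ψ x)
  calc ∫⁻ x, ∫⁻ y, f x * f y * ENNReal.ofReal (|ψ x - ψ y| ^ (-lam)) ∂ν ∂ν
      ≤ 2 * ∫⁻ x, (∫⁻ y in {y | f y ≤ f x},
          f x * f y * ENNReal.ofReal (|ψ x - ψ y| ^ (-lam)) ∂ν) ∂ν :=
        lintegral_lintegral_symm_le (by fun_prop)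
          (fun x y => by rw [mul_comm (f x), abs_sub_comm]) hf
    _ ≤ 2 * ∫⁻ x, ENNReal.ofReal (C * N ^ (1 - lam)) * f x ^ (2 / (2 - lam)) ∂ν :=
        mul_le_mul_right (lintegral_mono_ae hinner) _
    _ = ENNReal.ofReal (2 * C) * ENNReal.ofReal N ^ (2 - lam) := by
        rw [lintegral_const_mul _ (by fun_prop), hfN, ofReal_rpow_of_pos hN,
          ← ofReal_mul (by positivity), ← ofReal_mul (by positivity), ← ofReal_ofNat 2,
          ← ofReal_mul zero_le_two, show 2 - lam = 1 - lam + 1 by ring,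
          Real.rpow_add_one hN.ne']
        congr 1
        ring
    _ = _ := by rw [hfN]

end HardyLittlewoodSobolev

/-- The graph of a convex function `φ` over the open interval `I`, encoded by its first two
derivatives `ψ = φ'` and `κ = φ'' ≥ 0`; no continuity of `κ` is asked for. -/
structure ConvexGraph (I : Set ℝ) (φ ψ κ : ℝ → ℝ) : Prop where
  isOpen : IsOpen I
  ordConnected : I.OrdConnected
  hasDerivAt_fun : ∀ x ∈ I, HasDerivAt φ (ψ x) x
  hasDerivAt_slope : ∀ x ∈ I, HasDerivAt ψ (κ x) x
  curvature_nonneg : ∀ x ∈ I, 0 ≤ κ x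

/-- The points of `I` at which the curvature `κ` is positive. -/
def curvedPart (I : Set ℝ) (κ : ℝ → ℝ) : Set ℝ := {x ∈ I | 0 < κ x}

/-- The ordered pairs of points of positive curvature, on which the sum map of the graph is
injective. -/
def curvedPairs (I : Set ℝ) (κ : ℝ → ℝ) : Set (ℝ × ℝ) :=
  {w | w.1 < w.2} ∩ curvedPart I κ ×ˢ curvedPart I κ

/-- The measure `κ ^ t dx` on `I`: for `t = 1 / 3` the affine arclength of the graph, for `t = 1`
the pull-back of Lebesgue measure under the slope `φ'`. -/
noncomputable def curvatureMeasure (I : Set ℝ) (κ : ℝ → ℝ) (t : ℝ) : Measure ℝ :=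
  (volume.restrict I).withDensity fun x => ENNReal.ofReal (κ x ^ t)

/-- The sum of two points of the graph of `φ`, as a function of their abscissae. -/
def sumMap (φ : ℝ → ℝ) (w : ℝ × ℝ) : ℝ × ℝ := (w.1 + w.2, φ w.1 + φ w.2)

/-- The pull-back of Lebesgue measure under `sumMap φ`, whose Jacobian is `ψ w.2 - ψ w.1` when
`ψ = φ'`. -/
noncomputable def pairMeasure (I : Set ℝ) (ψ κ : ℝ → ℝ) : Measure (ℝ × ℝ) :=
  (volume.restrict (curvedPairs I κ)).withDensity fun w => ENNReal.ofReal (ψ w.2 - ψ w.1)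

namespace ConvexGraph

variable {I : Set ℝ} {φ ψ κ : ℝ → ℝ}

theorem measurableSet_curvedPart (h : ConvexGraph I φ ψ κ) :
    MeasurableSet (curvedPart I κ) := by
  have heq : curvedPart I κ = I ∩ {x | 0 < deriv ψ x} := by
    ext x
    exact and_congr_right fun hx => by rw [mem_ofPred_eq, (h.hasDerivAt_slope x hx).deriv]
  rw [heq]
  exact h.isOpen.measurableSet.inter (measurableSet_lt measurable_const (measurable_deriv ψ))

theorem measurableSet_curvedPairs (h : ConvexGraph I φ ψ κ) :
    MeasurableSet (curvedPairs I κ) :=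
  (measurableSet_lt measurable_fst measurable_snd).inter
    (h.measurableSet_curvedPart.prod h.measurableSet_curvedPart)

theorem ae_pairMeasure_mem_curvedPairs (h : ConvexGraph I φ ψ κ) :
    ∀ᵐ w ∂pairMeasure I ψ κ, w ∈ curvedPairs I κ :=
  (withDensity_absolutelyContinuous _ _).ae_le (ae_restrict_mem h.measurableSet_curvedPairs)

theorem monotoneOn_slope (h : ConvexGraph I φ ψ κ) : MonotoneOn ψ I := by
  have hI : interior I = I := h.isOpen.interior_eq
  refine monotoneOn_of_deriv_nonneg h.ordConnected.convex
    (fun x hx => (h.hasDerivAt_slope x hx).continuousAt.continuousWithinAt)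
    (fun x hx => ?_) fun x hx => ?_ <;> rw [hI] at hx
  · exact (h.hasDerivAt_slope x hx).differentiableAt.differentiableWithinAt
  · rw [(h.hasDerivAt_slope x hx).deriv]
    exact h.curvature_nonneg x hx

theorem slope_lt_slope (h : ConvexGraph I φ ψ κ) {x y : ℝ} (hx : x ∈ curvedPart I κ) (hy : y ∈ I)
    (hxy : x < y) : ψ x < ψ y := by
  have hmono := h.monotoneOn_slope
  refine (hmono hx.1 hy hxy.le).lt_of_ne fun heq => hx.2.ne' ?_
  have hconst (z : ℝ) (hz : z ∈ Icc x y) : ψ z = ψ x := by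
    have hzI : z ∈ I := h.ordConnected.out hx.1 hy hz
    exact le_antisymm ((hmono hzI hy hz.2).trans heq.ge) (hmono hx.1 hzI hz.1)
  exact (uniqueDiffOn_Icc hxy x (left_mem_Icc.2 hxy.le)).eq_deriv _
    (h.hasDerivAt_slope x hx.1).hasDerivWithinAt
    ((hasDerivWithinAt_const x (Icc x y) (ψ x)).congr hconst rfl)

theorem slope_lt_slope_of_mem_curvedPairs (h : ConvexGraph I φ ψ κ) {w : ℝ × ℝ}
    (hw : w ∈ curvedPairs I κ) : ψ w.1 < ψ w.2 :=
  h.slope_lt_slope hw.2.1 hw.2.2.1 hw.1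

theorem injOn_slope (h : ConvexGraph I φ ψ κ) : InjOn ψ (curvedPart I κ) := by
  have hstrict : StrictMonoOn ψ (curvedPart I κ) :=
    fun x hx y hy hxy => h.slope_lt_slope hx hy.1 hxy
  exact hstrict.injOn

theorem ae_curvatureMeasure_mem_curvedPart (h : ConvexGraph I φ ψ κ) (hκ : Measurable κ) {t : ℝ}
    (ht : t ≠ 0) : ∀ᵐ x ∂curvatureMeasure I κ t, x ∈ curvedPart I κ := by
  refine (ae_withDensity_iff (by fun_prop)).2 ?_
  filter_upwards [ae_restrict_mem h.isOpen.measurableSet] with x hx hκx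
  refine ⟨hx, (h.curvature_nonneg x hx).lt_of_ne fun h0 => hκx ?_⟩
  rw [← h0, Real.zero_rpow ht, ofReal_zero]

theorem curvatureMeasure_eq_withDensity_restrict_curvedPart (h : ConvexGraph I φ ψ κ)
    (hκ : Measurable κ) {t : ℝ} (ht : t ≠ 0) :
    curvatureMeasure I κ t
      = (volume.restrict (curvedPart I κ)).withDensity fun x => ENNReal.ofReal (κ x ^ t) := by
  rw [← Measure.restrict_eq_self_of_ae_mem (h.ae_curvatureMeasure_mem_curvedPart hκ ht),
    curvatureMeasure, restrict_withDensity h.measurableSet_curvedPart,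
    Measure.restrict_restrict h.measurableSet_curvedPart,
    inter_eq_left.2 (fun x (hx : x ∈ curvedPart I κ) => hx.1)]

theorem map_slope_curvatureMeasure_le (h : ConvexGraph I φ ψ κ) (hψ : Measurable ψ)
    (hκ : Measurable κ) : (curvatureMeasure I κ 1).map ψ ≤ volume := by
  have hK := h.measurableSet_curvedPart
  refine Measure.le_iff.2 fun s hs => ?_
  calc (curvatureMeasure I κ 1).map ψ s
      = ∫⁻ x in curvedPart I κ, ENNReal.ofReal (κ x ^ (1 : ℝ)) * s.indicator 1 (ψ x) := by
        rw [← lintegral_indicator_one hs, lintegral_map (measurable_one.indicator hs) hψ,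
          h.curvatureMeasure_eq_withDensity_restrict_curvedPart hκ one_ne_zero]
        exact lintegral_withDensity_eq_lintegral_mul _ (by fun_prop)
          ((measurable_one.indicator hs).comp hψ)
    _ = ∫⁻ x in curvedPart I κ, ENNReal.ofReal |κ x| * s.indicator 1 (ψ x) :=
        setLIntegral_congr_fun hK fun x hx => by rw [Real.rpow_one, abs_of_pos hx.2]
    _ = ∫⁻ t in ψ '' curvedPart I κ, s.indicator 1 t :=
        (lintegral_image_eq_lintegral_abs_deriv_mul hK
          (fun x hx => (h.hasDerivAt_slope x hx.1).hasDerivWithinAt) h.injOn_slope _).symm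
    _ ≤ ∫⁻ t, s.indicator 1 t := setLIntegral_le_lintegral _ _
    _ = volume s := lintegral_indicator_one hs

/-- If two chords of the graph have the same midpoint and one lies inside the other, the mean value
theorem on the two outer gaps produces equal slopes on either side of the inner chord. -/
theorem fst_le_fst_of_sumMap_eq (h : ConvexGraph I φ ψ κ) {w w' : ℝ × ℝ}
    (hw : w ∈ curvedPairs I κ) (hw' : w' ∈ curvedPairs I κ) (heq : sumMap φ w = sumMap φ w') :
    w'.1 ≤ w.1 := by
  obtain ⟨hsum, hφsum⟩ := Prod.mk.injEq .. ▸ heq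
  by_contra! hlt
  have hlt' : w'.2 < w.2 := by linarith
  obtain ⟨⟨_, ⟨hx, _⟩, ⟨hy, _⟩⟩, ⟨_, ⟨hx', _⟩, ⟨hy', _⟩⟩⟩ := And.intro hw hw'
  have hmean {u v : ℝ} (hu : u ∈ I) (hv : v ∈ I) (huv : u < v) :
      ∃ c ∈ Ioo u v, c ∈ I ∧ ψ c = (φ v - φ u) / (v - u) := by
    have hsub : Icc u v ⊆ I := h.ordConnected.out hu hv
    obtain ⟨c, hc, hslope⟩ := exists_hasDerivAt_eq_slope φ ψ huv
      (fun z hz => (h.hasDerivAt_fun z (hsub hz)).continuousAt.continuousWithinAt)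
      fun z hz => h.hasDerivAt_fun z (hsub (Ioo_subset_Icc_self hz))
    exact ⟨c, hc, hsub (Ioo_subset_Icc_self hc), hslope⟩
  obtain ⟨c, hc, hcI, hψc⟩ := hmean hx hx' hlt
  obtain ⟨d, hd, hdI, hψd⟩ := hmean hy' hy hlt'
  have hslope : ψ c = ψ d := by
    rw [hψc, hψd, show φ w'.1 - φ w.1 = φ w.2 - φ w'.2 by linarith,
      show w'.1 - w.1 = w.2 - w'.2 by linarith]
  have hleft : ψ c ≤ ψ w'.1 := h.monotoneOn_slope hcI hx' hc.2.le
  have hmiddle : ψ w'.1 < ψ w'.2 := h.slope_lt_slope_of_mem_curvedPairs hw'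
  have hright : ψ w'.2 ≤ ψ d := h.monotoneOn_slope hy' hdI hd.1.le
  linarith

theorem injOn_sumMap (h : ConvexGraph I φ ψ κ) : InjOn (sumMap φ) (curvedPairs I κ) := by
  intro w hw w' hw' heq
  have hfst : w.1 = w'.1 :=
    (h.fst_le_fst_of_sumMap_eq hw' hw heq.symm).antisymm (h.fst_le_fst_of_sumMap_eq hw hw' heq)
  have hsum : w.1 + w.2 = w'.1 + w'.2 := congrArg Prod.fst heq
  exact Prod.ext hfst (by linarith)

theorem hasFDerivAt_sumMap (h : ConvexGraph I φ ψ κ) {w : ℝ × ℝ} (hw : w ∈ I ×ˢ I) :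
    HasFDerivAt (sumMap φ) (LinearMap.toContinuousLinearMap
      (Matrix.toLin (Module.Basis.finTwoProd ℝ) (Module.Basis.finTwoProd ℝ)
        !![1, 1; ψ w.1, ψ w.2])) w := by
  rw [Matrix.toLin_finTwoProd_toContinuousLinearMap]
  convert! (hasFDerivAt_fst (𝕜 := ℝ) (p := w)).add hasFDerivAt_snd |>.prodMk
    (((h.hasDerivAt_fun _ hw.1).comp_hasFDerivAt w hasFDerivAt_fst).add
      ((h.hasDerivAt_fun _ hw.2).comp_hasFDerivAt w hasFDerivAt_snd)) using 2
  all_goals simp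

theorem lintegral_comp_sumMap_pairMeasure_le (h : ConvexGraph I φ ψ κ) (hφ : Measurable φ)
    (hψ : Measurable ψ) {f : ℝ × ℝ → ℝ≥0∞} (hf : Measurable f) :
    ∫⁻ w, f (sumMap φ w) ∂pairMeasure I ψ κ ≤ ∫⁻ z, f z := by
  have hsum : Measurable (sumMap φ) := by unfold sumMap; fun_prop
  calc ∫⁻ w, f (sumMap φ w) ∂pairMeasure I ψ κ
      = ∫⁻ w in curvedPairs I κ, ENNReal.ofReal (ψ w.2 - ψ w.1) * f (sumMap φ w) :=
        lintegral_withDensity_eq_lintegral_mul _ (by fun_prop) (hf.comp hsum)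
    _ = ∫⁻ w in curvedPairs I κ, ENNReal.ofReal |(LinearMap.toContinuousLinearMap
          (Matrix.toLin (Module.Basis.finTwoProd ℝ) (Module.Basis.finTwoProd ℝ)
            !![1, 1; ψ w.1, ψ w.2])).det| * f (sumMap φ w) := by
        refine setLIntegral_congr_fun h.measurableSet_curvedPairs fun w hw => ?_
        have hJ := h.slope_lt_slope_of_mem_curvedPairs hw
        simp only [ContinuousLinearMap.det, LinearMap.coe_toContinuousLinearMap,
          LinearMap.det_toLin, Matrix.det_fin_two_of, one_mul, abs_of_pos (sub_pos.2 hJ)]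
    _ = ∫⁻ z in sumMap φ '' curvedPairs I κ, f z :=
        (lintegral_image_eq_lintegral_abs_det_fderiv_mul volume h.measurableSet_curvedPairs
          (fun w hw => (h.hasFDerivAt_sumMap ⟨hw.2.1.1, hw.2.2.1⟩).hasFDerivWithinAt)
          h.injOn_sumMap f).symm
    _ ≤ ∫⁻ z, f z := setLIntegral_le_lintegral _ _

end ConvexGraph

section PairKernel

/-- The kernel `χ̂(e₁(x)ξ) χ̂(e₂(x)η) e^{i(ξx + ηφ(x))}` of the linearized extension operator, with
`ζ = (ξ, η)`. -/
noncomputable def extensionKernel (χ : ℝ → ℂ) (φ e₁ e₂ : ℝ → ℝ) (ζ : ℝ × ℝ) (x : ℝ) : ℂ :=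
  fourierTransform1 χ (e₁ x * ζ.1) * fourierTransform1 χ (e₂ x * ζ.2) *
    Complex.exp (Complex.I * (ζ.1 * x + ζ.2 * φ x))

/-- The kernel of the bilinear operator obtained by squaring the linearized extension operator. -/
noncomputable def pairKernel (χ : ℝ → ℂ) (φ e₁ e₂ : ℝ → ℝ) (w ζ : ℝ × ℝ) : ℂ :=
  extensionKernel χ φ e₁ e₂ ζ w.1 * extensionKernel χ φ e₁ e₂ ζ w.2

/-- The iterated one-dimensional maximal functions, two in each variable, that dominate the adjoint
of the bilinear operator: each of its two points carries one cutoff in each variable. -/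
noncomputable def iteratedMaximal (c : ℝ≥0∞) (f : ℝ × ℝ → ℝ≥0∞) : ℝ × ℝ → ℝ≥0∞ :=
  maximalSnd c (maximalSnd c (maximalFst c (maximalFst c f)))

theorem measurable_iteratedMaximal {c : ℝ≥0∞} {f : ℝ × ℝ → ℝ≥0∞} (hf : Measurable f) :
    Measurable (iteratedMaximal c f) :=
  measurable_maximalSnd (measurable_maximalSnd (measurable_maximalFst (measurable_maximalFst hf)))

theorem lintegral_sq_iteratedMaximal_le {c : ℝ≥0∞} {f : ℝ × ℝ → ℝ≥0∞} (hf : Measurable f) :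
    ∫⁻ w, iteratedMaximal c f w ^ 2
      ≤ (c * (8 * ENNReal.ofReal Real.pi)) ^ 8 * ∫⁻ w, f w ^ 2 := by
  have hf₁ := measurable_maximalFst (c := c) hf
  have hf₂ := measurable_maximalFst (c := c) hf₁
  have hf₃ := measurable_maximalSnd (c := c) hf₂
  calc ∫⁻ w, iteratedMaximal c f w ^ 2
      ≤ (c * (8 * ENNReal.ofReal Real.pi)) ^ 2 * ((c * (8 * ENNReal.ofReal Real.pi)) ^ 2 *
          ((c * (8 * ENNReal.ofReal Real.pi)) ^ 2 * ((c * (8 * ENNReal.ofReal Real.pi)) ^ 2 *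
            ∫⁻ w, f w ^ 2))) := by
        refine (lintegral_sq_maximalSnd_le hf₃).trans (mul_le_mul_right ?_ _)
        refine (lintegral_sq_maximalSnd_le hf₂).trans (mul_le_mul_right ?_ _)
        refine (lintegral_sq_maximalFst_le hf₁).trans (mul_le_mul_right ?_ _)
        exact lintegral_sq_maximalFst_le hf
    _ = (c * (8 * ENNReal.ofReal Real.pi)) ^ 8 * ∫⁻ w, f w ^ 2 := by ring

variable {χ : ℝ → ℂ} {φ e₁ e₂ : ℝ → ℝ}

theorem measurable_extensionKernel (hχ : Integrable χ) (hφ : Measurable φ) (he₁ : Measurable e₁)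
    (he₂ : Measurable e₂) :
    Measurable (Function.uncurry (extensionKernel χ φ e₁ e₂)) := by
  have hχ_meas := (continuous_fourierTransform1 hχ).measurable
  unfold extensionKernel Function.uncurry
  fun_prop

theorem norm_extensionKernel_le (χ : ℝ → ℂ) (φ e₁ e₂ : ℝ → ℝ) (ζ : ℝ × ℝ) (x : ℝ) :
    ‖extensionKernel χ φ e₁ e₂ ζ x‖ ≤ (∫ u, ‖χ u‖) ^ 2 := by
  have hexp : ‖Complex.exp (Complex.I * (ζ.1 * x + ζ.2 * φ x))‖ = 1 := norm_exp_I_mul_add ζ (x, φ x)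
  rw [extensionKernel, norm_mul, hexp, mul_one, norm_mul, sq]
  exact mul_le_mul (norm_fourierTransform1_le χ _) (norm_fourierTransform1_le χ _) (norm_nonneg _)
    (integral_nonneg fun u => norm_nonneg _)

theorem measurable_pairKernel (hχ : Integrable χ) (hφ : Measurable φ) (he₁ : Measurable e₁)
    (he₂ : Measurable e₂) : Measurable (Function.uncurry (pairKernel χ φ e₁ e₂)) := by
  have hχ_meas := (continuous_fourierTransform1 hχ).measurable
  unfold pairKernel extensionKernel Function.uncurry
  fun_prop

theorem norm_pairKernel_le (χ : ℝ → ℂ) (φ e₁ e₂ : ℝ → ℝ) (w ζ : ℝ × ℝ) :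
    ‖pairKernel χ φ e₁ e₂ w ζ‖ ≤ (∫ u, ‖χ u‖) ^ 4 := by
  rw [pairKernel, norm_mul, show (4 : ℕ) = 2 + 2 from rfl, pow_add]
  gcongr <;> exact norm_extensionKernel_le ..

theorem integral_mul_pairKernel (χ : ℝ → ℂ) (φ e₁ e₂ : ℝ → ℝ) (h : ℝ × ℝ → ℂ) (w : ℝ × ℝ) :
    ∫ ζ, h ζ * pairKernel χ φ e₁ e₂ w ζ = fourierTransform2 (fun ζ => h ζ *
      fourierTransform1 χ (e₁ w.1 * ζ.1) * fourierTransform1 χ (e₁ w.2 * ζ.1) *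
      fourierTransform1 χ (e₂ w.1 * ζ.2) * fourierTransform1 χ (e₂ w.2 * ζ.2)) (sumMap φ w) := by
  refine integral_congr_ae (.of_forall fun ζ => ?_)
  have hexp : Complex.exp (Complex.I * (ζ.1 * (sumMap φ w).1 + ζ.2 * (sumMap φ w).2))
      = Complex.exp (Complex.I * (ζ.1 * w.1 + ζ.2 * φ w.1)) *
        Complex.exp (Complex.I * (ζ.1 * w.2 + ζ.2 * φ w.2)) := by
    rw [← Complex.exp_add, sumMap]
    congr 1
    push_cast
    ring
  simp only [pairKernel, extensionKernel, hexp]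
  ring

theorem enorm_integral_mul_pairKernel_le (hχ : Integrable χ) {A : ℝ}
    (hχA : ∀ u, ‖χ u‖ ≤ A / (1 + u ^ 2)) {h : ℝ × ℝ → ℂ} (hh : Integrable h) {w : ℝ × ℝ}
    (he₁ : e₁ w.1 ∈ Ioo 0 1 ∧ e₁ w.2 ∈ Ioo 0 1) (he₂ : e₂ w.1 ∈ Ioo 0 1 ∧ e₂ w.2 ∈ Ioo 0 1) :
    ‖∫ ζ, h ζ * pairKernel χ φ e₁ e₂ w ζ‖ₑ
      ≤ iteratedMaximal (ENNReal.ofReal (2 * A)) (fun z => ‖fourierTransform2 h z‖ₑ)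
          (sumMap φ w) := by
  have hh₁ := integrable_mul_fourierTransform1 hχ hh (l := fun ζ => e₁ w.1 * ζ.1) (by fun_prop)
  have hh₂ := integrable_mul_fourierTransform1 hχ hh₁ (l := fun ζ => e₁ w.2 * ζ.1) (by fun_prop)
  have hh₃ := integrable_mul_fourierTransform1 hχ hh₂ (l := fun ζ => e₂ w.1 * ζ.2) (by fun_prop)
  rw [integral_mul_pairKernel]
  exact enorm_fourierTransform2_mul_snd_le hχ hχA hh₃
    (enorm_fourierTransform2_mul_snd_le hχ hχA hh₂
      (enorm_fourierTransform2_mul_fst_le hχ hχA hh₁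
        (enorm_fourierTransform2_mul_fst_le hχ hχA hh (fun _ => le_rfl) he₁.1) he₁.2)
      he₂.1) he₂.2 _

theorem ConvexGraph.lintegral_sq_enorm_integral_mul_pairKernel_le {I : Set ℝ} {ψ κ : ℝ → ℝ}
    (hG : ConvexGraph I φ ψ κ) (hφ : Measurable φ) (hψ : Measurable ψ) (hχ : Integrable χ) {A : ℝ}
    (hχA : ∀ u, ‖χ u‖ ≤ A / (1 + u ^ 2)) (he₁ : ∀ x ∈ I, e₁ x ∈ Ioo (0 : ℝ) 1)
    (he₂ : ∀ x ∈ I, e₂ x ∈ Ioo (0 : ℝ) 1) {h : ℝ × ℝ → ℂ} (hh_meas : Measurable h)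
    (hh : Integrable h) :
    ∫⁻ w, ‖∫ ζ, h ζ * pairKernel χ φ e₁ e₂ w ζ‖ₑ ^ 2 ∂pairMeasure I ψ κ
      ≤ (ENNReal.ofReal (2 * A) * (8 * ENNReal.ofReal Real.pi)) ^ 8 *
          ENNReal.ofReal ((2 * Real.pi) ^ 2) * ∫⁻ ζ, ‖h ζ‖ₑ ^ 2 := by
  set S := iteratedMaximal (ENNReal.ofReal (2 * A)) fun z => ‖fourierTransform2 h z‖ₑ
  have hFT : Measurable fun z => ‖fourierTransform2 h z‖ₑ := by
    unfold fourierTransform2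
    refine (StronglyMeasurable.integral_prod_right' (f := fun q : (ℝ × ℝ) × (ℝ × ℝ) =>
      Complex.exp (Complex.I * (q.2.1 * q.1.1 + q.2.2 * q.1.2)) * h q.2) ?_).measurable.enorm
    exact Measurable.stronglyMeasurable (by fun_prop)
  calc ∫⁻ w, ‖∫ ζ, h ζ * pairKernel χ φ e₁ e₂ w ζ‖ₑ ^ 2 ∂pairMeasure I ψ κ
      ≤ ∫⁻ w, S (sumMap φ w) ^ 2 ∂pairMeasure I ψ κ := by
        refine lintegral_mono_ae ?_
        filter_upwards [hG.ae_pairMeasure_mem_curvedPairs] with w ⟨_, ⟨hx, _⟩, ⟨hy, _⟩⟩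
        exact pow_le_pow_left' (enorm_integral_mul_pairKernel_le hχ hχA hh
          ⟨he₁ _ hx, he₁ _ hy⟩ ⟨he₂ _ hx, he₂ _ hy⟩) 2
    _ ≤ ∫⁻ z, S z ^ 2 :=
        hG.lintegral_comp_sumMap_pairMeasure_le hφ hψ ((measurable_iteratedMaximal hFT).pow_const 2)
    _ ≤ (ENNReal.ofReal (2 * A) * (8 * ENNReal.ofReal Real.pi)) ^ 8 *
          ∫⁻ z, ‖fourierTransform2 h z‖ₑ ^ 2 := lintegral_sq_iteratedMaximal_le hFT
    _ ≤ _ := by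
        rw [mul_assoc]
        exact mul_le_mul_right (lintegral_sq_enorm_fourierTransform2_le hh) _

end PairKernel

theorem sq_integral_eq_two_mul_setIntegral_lt {𝕜 : Type*} [RCLike 𝕜] {μ : Measure ℝ} [SFinite μ]
    [NullSingletonClass μ] {u : ℝ → 𝕜} (hu : Integrable u μ) :
    (∫ x, u x ∂μ) ^ 2 = 2 * ∫ w in {w : ℝ × ℝ | w.1 < w.2}, u w.1 * u w.2 ∂μ.prod μ := by
  set S := {w : ℝ × ℝ | w.1 < w.2}
  have hS : MeasurableSet S := measurableSet_lt measurable_fst measurable_snd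
  have hdiag : ∀ᵐ w ∂μ.prod μ, w.1 ≠ w.2 := by
    refine (Measure.ae_prod_iff_ae_ae (measurableSet_eq_fun measurable_fst measurable_snd).compl).2
      (.of_forall fun x => ?_)
    filter_upwards [compl_mem_ae_iff.2 (measure_singleton x)] with y hy using Ne.symm hy
  have hcompl : (Sᶜ : Set (ℝ × ℝ)) =ᵐ[μ.prod μ] (Prod.swap ⁻¹' S : Set (ℝ × ℝ)) := by
    rw [Filter.eventuallyEq_set]
    filter_upwards [hdiag] with w hw
    simp only [S, mem_compl_iff, mem_preimage, mem_ofPred_eq, Prod.fst_swap, Prod.snd_swap, not_lt]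
    exact hw.symm.le_iff_lt
  have hswap : ∫ w in Sᶜ, u w.1 * u w.2 ∂μ.prod μ = ∫ w in S, u w.1 * u w.2 ∂μ.prod μ := by
    rw [setIntegral_congr_set hcompl, ← Measure.measurePreserving_swap.setIntegral_preimage_emb
      MeasurableEquiv.prodComm.measurableEmbedding]
    exact integral_congr_ae (.of_forall fun w => mul_comm _ _)
  rw [sq, ← integral_prod_mul, ← integral_add_compl hS (hu.mul_prod hu), hswap, two_mul]

/-- The density of the pairs `w.1 < w.2` under `κ ^ t dx ⊗ κ ^ t dx` with respect to
`pairMeasure`. -/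
noncomputable def pairDensity (ψ κ : ℝ → ℝ) (t : ℝ) (w : ℝ × ℝ) : ℝ≥0 :=
  Real.toNNReal (κ w.1 ^ t * κ w.2 ^ t / (ψ w.2 - ψ w.1))

theorem measurable_pairDensity {ψ κ : ℝ → ℝ} (hψ : Measurable ψ) (hκ : Measurable κ) (t : ℝ) :
    Measurable (pairDensity ψ κ t) := by
  unfold pairDensity
  fun_prop

instance sigmaFinite_curvatureMeasure (I : Set ℝ) (κ : ℝ → ℝ) (t : ℝ) :
    SigmaFinite (curvatureMeasure I κ t) :=
  SigmaFinite.withDensity_ofReal _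

instance nullSingletonClass_curvatureMeasure (I : Set ℝ) (κ : ℝ → ℝ) (t : ℝ) :
    NullSingletonClass (curvatureMeasure I κ t) where
  measure_singleton x := withDensity_absolutelyContinuous _ _ (measure_singleton x)

instance sigmaFinite_pairMeasure (I : Set ℝ) (ψ κ : ℝ → ℝ) : SigmaFinite (pairMeasure I ψ κ) :=
  SigmaFinite.withDensity_ofReal _

theorem curvatureMeasure_congr {I : Set ℝ} (hI : MeasurableSet I) {κ κ' : ℝ → ℝ}
    (hκ : EqOn κ κ' I) (t : ℝ) : curvatureMeasure I κ t = curvatureMeasure I κ' t := by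
  refine withDensity_congr_ae ?_
  filter_upwards [ae_restrict_mem hI] with x hx
  rw [hκ hx]

namespace ConvexGraph

variable {I : Set ℝ} {φ ψ κ : ℝ → ℝ} {t : ℝ}

theorem exists_measurable (h : ConvexGraph I φ ψ κ) :
    ∃ φ' ψ' κ' : ℝ → ℝ, Measurable φ' ∧ Measurable ψ' ∧ Measurable κ' ∧
      ConvexGraph I φ' ψ' κ' ∧ EqOn φ' φ I ∧ EqOn κ' κ I := by
  have hI := h.isOpen.measurableSet
  have hderiv : EqOn (deriv ψ) κ I := fun x hx => (h.hasDerivAt_slope x hx).deriv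
  have hindicator {f : ℝ → ℝ} (hf : ContinuousOn f I) : Measurable (I.indicator f) := by
    classical
    rw [← piecewise_eq_indicator]
    exact hf.measurable_piecewise continuousOn_const hI
  have hcongr {f f' : ℝ → ℝ} (hf : ∀ x ∈ I, HasDerivAt f (f' x) x) (x : ℝ) (hx : x ∈ I) :
      HasDerivAt (I.indicator f) (f' x) x :=
    (hf x hx).congr_of_eventuallyEq (eqOn_indicator.eventuallyEq_of_mem (h.isOpen.mem_nhds hx))
  refine ⟨I.indicator φ, I.indicator ψ, deriv ψ,
    hindicator fun x hx => (h.hasDerivAt_fun x hx).continuousAt.continuousWithinAt,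
    hindicator fun x hx => (h.hasDerivAt_slope x hx).continuousAt.continuousWithinAt,
    measurable_deriv ψ, ⟨h.isOpen, h.ordConnected, fun x hx => ?_, fun x hx => ?_, fun x hx => ?_⟩,
    eqOn_indicator, hderiv⟩
  · rw [indicator_of_mem hx]
    exact hcongr h.hasDerivAt_fun x hx
  · rw [hderiv hx]
    exact hcongr h.hasDerivAt_slope x hx
  · rw [hderiv hx]
    exact h.curvature_nonneg x hx

theorem integral_curvatureMeasure (h : ConvexGraph I φ ψ κ) (t : ℝ) (F : ℝ → ℂ) :
    ∫ x, F x ∂curvatureMeasure I κ t = ∫ x in I, F x * ((κ x ^ t : ℝ) : ℂ) := by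
  have hI := h.isOpen.measurableSet
  have hκ : AEMeasurable κ (volume.restrict I) := by
    refine (measurable_deriv ψ).aemeasurable.congr ?_
    filter_upwards [ae_restrict_mem hI] with x hx using (h.hasDerivAt_slope x hx).deriv
  rw [curvatureMeasure, integral_withDensity_eq_integral_toReal_smul₀
    (hκ.pow_const t).ennreal_ofReal (.of_forall fun _ => ofReal_lt_top)]
  refine setIntegral_congr_fun hI fun x hx => ?_
  rw [ENNReal.toReal_ofReal (Real.rpow_nonneg (h.curvature_nonneg x hx) t), Complex.real_smul,
    mul_comm]

theorem ae_curvatureMeasure_mem (h : ConvexGraph I φ ψ κ) (t : ℝ) :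
    ∀ᵐ x ∂curvatureMeasure I κ t, x ∈ I :=
  (withDensity_absolutelyContinuous _ _).ae_le (ae_restrict_mem h.isOpen.measurableSet)

theorem curvatureMeasure_withDensity_rpow (h : ConvexGraph I φ ψ κ) (hκ : Measurable κ) {s : ℝ}
    (hs : s ≠ 0) (hst : s + t ≠ 0) :
    (curvatureMeasure I κ s).withDensity (fun x => ENNReal.ofReal (κ x ^ t))
      = curvatureMeasure I κ (s + t) := by
  rw [h.curvatureMeasure_eq_withDensity_restrict_curvedPart hκ hs,
    h.curvatureMeasure_eq_withDensity_restrict_curvedPart hκ hst,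
    ← withDensity_mul _ (by fun_prop) (by fun_prop)]
  refine withDensity_congr_ae ?_
  filter_upwards [ae_restrict_mem h.measurableSet_curvedPart] with x hx
  rw [Pi.mul_apply, ← ENNReal.ofReal_mul (Real.rpow_nonneg hx.2.le _), Real.rpow_add hx.2]

theorem restrict_lt_prod_curvatureMeasure (h : ConvexGraph I φ ψ κ) (hψ : Measurable ψ)
    (hκ : Measurable κ) (ht : t ≠ 0) :
    ((curvatureMeasure I κ t).prod (curvatureMeasure I κ t)).restrict {w | w.1 < w.2}
      = (pairMeasure I ψ κ).withDensity fun w => pairDensity ψ κ t w := by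
  have hlt : MeasurableSet {w : ℝ × ℝ | w.1 < w.2} := measurableSet_lt measurable_fst measurable_snd
  rw [h.curvatureMeasure_eq_withDensity_restrict_curvedPart hκ ht,
    prod_withDensity (by fun_prop) (by fun_prop), restrict_withDensity hlt, Measure.prod_restrict,
    Measure.restrict_restrict hlt, ← Measure.volume_eq_prod, pairMeasure,
    ← withDensity_mul _ (by fun_prop) (measurable_pairDensity hψ hκ t).coe_nnreal_ennreal]
  refine withDensity_congr_ae ?_
  filter_upwards [ae_restrict_mem h.measurableSet_curvedPairs] with w hw
  have hJ : 0 < ψ w.2 - ψ w.1 := sub_pos.2 (h.slope_lt_slope_of_mem_curvedPairs hw)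
  change _ = ENNReal.ofReal (ψ w.2 - ψ w.1) * ENNReal.ofReal _
  rw [← ENNReal.ofReal_mul (Real.rpow_nonneg hw.2.1.2.le _), ← ENNReal.ofReal_mul hJ.le,
    mul_div_cancel₀ _ hJ.ne']

end ConvexGraph

section Squaring

variable {I : Set ℝ} {χ : ℝ → ℂ} {φ ψ κ e₁ e₂ : ℝ → ℝ} {g : ℝ → ℂ} {t : ℝ}

/-- The function on pairs to which the bilinear operator with kernel `pairKernel` is applied, so as
to obtain the square of the extension of `g`. -/
noncomputable def pairFunction (ψ κ : ℝ → ℝ) (t : ℝ) (g : ℝ → ℂ) (w : ℝ × ℝ) : ℂ :=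
  pairDensity ψ κ t w • (g w.1 * g w.2)

theorem measurable_pairFunction (hψ : Measurable ψ) (hκ : Measurable κ) (hg : Measurable g) :
    Measurable (pairFunction ψ κ t g) :=
  (measurable_pairDensity hψ hκ t).smul
    ((hg.comp measurable_fst).mul (hg.comp measurable_snd))

theorem ConvexGraph.integrable_pairFunction (h : ConvexGraph I φ ψ κ) (hψ : Measurable ψ)
    (hκ : Measurable κ) (ht : t ≠ 0) (hg : Integrable g (curvatureMeasure I κ t)) :
    Integrable (pairFunction ψ κ t g) (pairMeasure I ψ κ) := by
  refine (integrable_withDensity_iff_integrable_smul (measurable_pairDensity hψ hκ t)).1 ?_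
  rw [← h.restrict_lt_prod_curvatureMeasure hψ hκ ht]
  exact (hg.mul_prod hg).restrict

theorem ConvexGraph.sq_integral_extensionKernel_mul (h : ConvexGraph I φ ψ κ) (hφ : Measurable φ)
    (hψ : Measurable ψ) (hκ : Measurable κ) (hχ : Integrable χ) (he₁ : Measurable e₁)
    (he₂ : Measurable e₂) (ht : t ≠ 0) (hg : Integrable g (curvatureMeasure I κ t)) (ζ : ℝ × ℝ) :
    (∫ x, extensionKernel χ φ e₁ e₂ ζ x * g x ∂curvatureMeasure I κ t) ^ 2
      = 2 * ∫ w, pairFunction ψ κ t g w * pairKernel χ φ e₁ e₂ w ζ ∂pairMeasure I ψ κ := by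
  have hU : Measurable (extensionKernel χ φ e₁ e₂ ζ) :=
    (measurable_extensionKernel hχ hφ he₁ he₂).of_uncurry_left
  rw [sq_integral_eq_two_mul_setIntegral_lt (hg.bdd_mul hU.aestronglyMeasurable
      (.of_forall (norm_extensionKernel_le χ φ e₁ e₂ ζ))),
    h.restrict_lt_prod_curvatureMeasure hψ hκ ht,
    integral_withDensity_eq_integral_smul (measurable_pairDensity hψ hκ t)]
  congr 2 with w
  rw [pairFunction, pairKernel, smul_mul_assoc]
  congr 1
  ring

end Squaring

section Weight

variable {I : Set ℝ} {φ ψ κ : ℝ → ℝ} {g : ℝ → ℂ} {r : ℝ}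

theorem rpow_weight_div_eq {k₁ k₂ J : ℝ} (hk₁ : 0 < k₁) (hk₂ : 0 < k₂) (hJ : 0 < J) (t r : ℝ) :
    (k₁ ^ t * k₂ ^ t / J) ^ r
      = k₁ * k₂ / J * (k₁ ^ (r * t - 1) * k₂ ^ (r * t - 1) * J ^ (-(r - 1))) := by
  rw [Real.div_rpow (by positivity) hJ.le, Real.mul_rpow (by positivity) (by positivity),
    ← Real.rpow_mul hk₁.le, ← Real.rpow_mul hk₂.le, Real.rpow_sub_one hk₁.ne',
    Real.rpow_sub_one hk₂.ne', Real.rpow_neg hJ.le, Real.rpow_sub_one hJ.ne', mul_comm t r]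
  field_simp

theorem ConvexGraph.enorm_pairFunction_rpow (h : ConvexGraph I φ ψ κ) {t : ℝ} (hr : 0 ≤ r)
    (g : ℝ → ℂ) {w : ℝ × ℝ} (hw : w ∈ curvedPairs I κ) :
    ‖pairFunction ψ κ t g w‖ₑ ^ r = pairDensity ψ κ 1 w *
      (‖g w.1‖ₑ ^ r * ENNReal.ofReal (κ w.1 ^ (r * t - 1)) *
        (‖g w.2‖ₑ ^ r * ENNReal.ofReal (κ w.2 ^ (r * t - 1))) *
        ENNReal.ofReal (|ψ w.1 - ψ w.2| ^ (-(r - 1)))) := by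
  obtain ⟨hk₁, hk₂⟩ : 0 < κ w.1 ∧ 0 < κ w.2 := ⟨hw.2.1.2, hw.2.2.2⟩
  have hJ : 0 < ψ w.2 - ψ w.1 := sub_pos.2 (h.slope_lt_slope_of_mem_curvedPairs hw)
  have hdensity : (pairDensity ψ κ t w : ℝ≥0∞) ^ r = pairDensity ψ κ 1 w *
      (ENNReal.ofReal (κ w.1 ^ (r * t - 1)) * ENNReal.ofReal (κ w.2 ^ (r * t - 1)) *
        ENNReal.ofReal ((ψ w.2 - ψ w.1) ^ (-(r - 1)))) := by
    change ENNReal.ofReal _ ^ r = ENNReal.ofReal _ * _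
    rw [ENNReal.ofReal_rpow_of_nonneg (by positivity) hr, rpow_weight_div_eq hk₁ hk₂ hJ,
      Real.rpow_one, Real.rpow_one, ENNReal.ofReal_mul (by positivity),
      ENNReal.ofReal_mul (by positivity), ENNReal.ofReal_mul (by positivity)]
  rw [pairFunction, NNReal.smul_def, enorm_smul, Real.enorm_of_nonneg NNReal.zero_le_coe,
    ENNReal.ofReal_coe_nnreal, enorm_mul, ENNReal.mul_rpow_of_nonneg _ _ hr,
    ENNReal.mul_rpow_of_nonneg _ _ hr, hdensity, abs_sub_comm, abs_of_pos hJ]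
  ring

theorem ConvexGraph.lintegral_rpow_enorm_mul_weight_eq (h : ConvexGraph I φ ψ κ)
    (hκ : Measurable κ) (hg : Measurable g) (hr : r < 3) :
    ∫⁻ x, (‖g x‖ₑ ^ r * ENNReal.ofReal (κ x ^ (r * (1 / 3) - 1))) ^ (2 / (3 - r))
        ∂curvatureMeasure I κ 1
      = ∫⁻ x, ‖g x‖ₑ ^ (2 * r / (3 - r)) ∂curvatureMeasure I κ (1 / 3) := by
  have hr' : 0 < 3 - r := sub_pos.2 hr
  have hexp : (r * (1 / 3) - 1) * (2 / (3 - r)) = -(2 / 3) := by field_simp; ring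
  rw [show (1 / 3 : ℝ) = 1 + -(2 / 3) by norm_num,
    ← h.curvatureMeasure_withDensity_rpow hκ one_ne_zero (by norm_num),
    show (1 + -(2 / 3) : ℝ) = 1 / 3 by norm_num]
  refine Eq.trans ?_ (lintegral_withDensity_eq_lintegral_mul _ (by fun_prop) (by fun_prop)).symm
  refine lintegral_congr_ae ?_
  filter_upwards [h.ae_curvatureMeasure_mem_curvedPart hκ one_ne_zero] with x hx
  rw [ENNReal.mul_rpow_of_nonneg _ _ (by positivity), ← ENNReal.rpow_mul,
    ENNReal.ofReal_rpow_of_pos (Real.rpow_pos_of_pos hx.2 _), ← Real.rpow_mul hx.2.le, hexp,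
    Pi.mul_apply, mul_comm, mul_div_assoc', mul_comm r]

/-- The exponent `1 / 3` of the affine arclength is the one for which the weights left over from the
curvature recombine into the measure itself. -/
theorem ConvexGraph.lintegral_rpow_enorm_pairFunction_le (h : ConvexGraph I φ ψ κ)
    (hψ : Measurable ψ) (hκ : Measurable κ) (hg : Measurable g) (h1 : 1 < r) (h2 : r < 2) :
    ∫⁻ w, ‖pairFunction ψ κ (1 / 3) g w‖ₑ ^ r ∂pairMeasure I ψ κ
      ≤ ENNReal.ofReal (2 * (2 / (1 - (r - 1)) + 2 ^ ((r - 1) / 2))) *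
          (∫⁻ x, ‖g x‖ₑ ^ (2 * r / (3 - r)) ∂curvatureMeasure I κ (1 / 3)) ^ (3 - r) := by
  set f : ℝ → ℝ≥0∞ := fun x => ‖g x‖ₑ ^ r * ENNReal.ofReal (κ x ^ (r * (1 / 3) - 1))
  have hf : Measurable f := by fun_prop
  set H : ℝ × ℝ → ℝ≥0∞ := fun w =>
    f w.1 * f w.2 * ENNReal.ofReal (|ψ w.1 - ψ w.2| ^ (-(r - 1)))
  have hH : Measurable H := by fun_prop
  calc ∫⁻ w, ‖pairFunction ψ κ (1 / 3) g w‖ₑ ^ r ∂pairMeasure I ψ κ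
      = ∫⁻ w, pairDensity ψ κ 1 w * H w ∂pairMeasure I ψ κ := by
        refine lintegral_congr_ae ?_
        filter_upwards [h.ae_pairMeasure_mem_curvedPairs] with w hw
        exact h.enorm_pairFunction_rpow (by linarith) g hw
    _ = ∫⁻ w in {w | w.1 < w.2}, H w ∂(curvatureMeasure I κ 1).prod (curvatureMeasure I κ 1) := by
        rw [h.restrict_lt_prod_curvatureMeasure hψ hκ one_ne_zero]
        exact (lintegral_withDensity_eq_lintegral_mul _
          (measurable_pairDensity hψ hκ 1).coe_nnreal_ennreal hH).symm
    _ ≤ ∫⁻ w, H w ∂(curvatureMeasure I κ 1).prod (curvatureMeasure I κ 1) :=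
        setLIntegral_le_lintegral _ _
    _ = ∫⁻ x, ∫⁻ y, H (x, y) ∂curvatureMeasure I κ 1 ∂curvatureMeasure I κ 1 :=
        lintegral_prod _ hH.aemeasurable
    _ ≤ _ := by
        refine (lintegral_lintegral_mul_rpow_abs_sub_le hψ (h.map_slope_curvatureMeasure_le hψ hκ)
          (by linarith) (by linarith) hf).trans_eq ?_
        rw [show 2 - (r - 1) = 3 - r by ring,
          h.lintegral_rpow_enorm_mul_weight_eq hκ hg (by linarith)]

end Weight

section Extension

variable {I : Set ℝ} {χ : ℝ → ℂ} {A : ℝ} {φ ψ κ e₁ e₂ : ℝ → ℝ} {g : ℝ → ℂ} {s r : ℝ}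
  {p p' q q' : ℝ≥0∞}

theorem ConvexGraph.lintegral_sq_enorm_integral_pairKernel_le (h : ConvexGraph I φ ψ κ)
    (hφ : Measurable φ) (hψ : Measurable ψ) (hχ : Integrable χ)
    (hχA : ∀ u, ‖χ u‖ ≤ A / (1 + u ^ 2)) (he₁ : Measurable e₁) (he₂ : Measurable e₂)
    (he₁_mem : ∀ x ∈ I, e₁ x ∈ Ioo (0 : ℝ) 1) (he₂_mem : ∀ x ∈ I, e₂ x ∈ Ioo (0 : ℝ) 1)
    {G : ℝ × ℝ → ℂ} (hG : Measurable G) (hG_int : Integrable G (pairMeasure I ψ κ)) :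
    ∫⁻ ζ, ‖∫ w, G w * pairKernel χ φ e₁ e₂ w ζ ∂pairMeasure I ψ κ‖ₑ ^ 2
      ≤ (ENNReal.ofReal (2 * A) * (8 * ENNReal.ofReal Real.pi)) ^ 8 *
          ENNReal.ofReal ((2 * Real.pi) ^ 2) * ∫⁻ w, ‖G w‖ₑ ^ 2 ∂pairMeasure I ψ κ :=
  lintegral_sq_enorm_integral_mul_le_of_adjoint (measurable_pairKernel hχ hφ he₁ he₂)
    (norm_pairKernel_le χ φ e₁ e₂)
    (fun _ hh_meas hh => h.lintegral_sq_enorm_integral_mul_pairKernel_le hφ hψ hχ hχA he₁_mem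
      he₂_mem hh_meas hh) hG hG_int

theorem exists_lintegral_rpow_integral_pairKernel_le (hχ : Integrable χ)
    (hχA : ∀ u, ‖χ u‖ ≤ A / (1 + u ^ 2)) (hsr : s.HolderConjugate r) (hs : 2 < s) :
    ∃ C : ℝ≥0, ∀ {I : Set ℝ} {φ ψ κ e₁ e₂ : ℝ → ℝ}, ConvexGraph I φ ψ κ → Measurable φ →
      Measurable ψ → Measurable e₁ → Measurable e₂ → (∀ x ∈ I, e₁ x ∈ Ioo (0 : ℝ) 1) →
      (∀ x ∈ I, e₂ x ∈ Ioo (0 : ℝ) 1) → ∀ {G : ℝ × ℝ → ℂ}, Measurable G →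
      Integrable G (pairMeasure I ψ κ) →
      ∫⁻ ζ, ‖∫ w, G w * pairKernel χ φ e₁ e₂ w ζ ∂pairMeasure I ψ κ‖ₑ ^ s
        ≤ C * (∫⁻ w, ‖G w‖ₑ ^ r ∂pairMeasure I ψ κ) ^ (s - 1) := by
  set B := (∫ u, ‖χ u‖) ^ 4 + 1
  have hB : 0 < B := by positivity
  set K := (ENNReal.ofReal (2 * A) * (8 * ENNReal.ofReal Real.pi)) ^ 8 *
    ENNReal.ofReal ((2 * Real.pi) ^ 2)
  have hK : K ≤ (K.toNNReal + 1 : ℝ≥0) := by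
    rw [ENNReal.coe_add, ENNReal.coe_toNNReal (by finiteness)]
    exact le_self_add
  refine ⟨Real.toNNReal (s * 4 * ((2 * B) ^ (s - 2) / (s - 2))) * (K.toNNReal + 1), ?_⟩
  intro I φ ψ κ e₁ e₂ h hφ hψ he₁ he₂ he₁_mem he₂_mem G hG hG_int
  rw [ENNReal.coe_mul]
  refine lintegral_rpow_enorm_integral_mul_le (measurable_pairKernel hχ hφ he₁ he₂)
    (fun w ζ => (norm_pairKernel_le χ φ e₁ e₂ w ζ).trans (le_add_of_nonneg_right zero_le_one)) hB
    (fun F hF hF_int => ?_) (by positivity) hsr hs hG hG_int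
  exact (h.lintegral_sq_enorm_integral_pairKernel_le hφ hψ hχ hχA he₁ he₂ he₁_mem he₂_mem hF
    hF_int).trans (mul_le_mul_left hK _)

theorem exists_lintegral_rpow_integral_extensionKernel_le_of_measurable (hχ : Integrable χ)
    (hχA : ∀ u, ‖χ u‖ ≤ A / (1 + u ^ 2)) (hsr : s.HolderConjugate r) (hs : 2 < s) :
    ∃ C : ℝ≥0, ∀ {I : Set ℝ} {φ ψ κ e₁ e₂ : ℝ → ℝ}, ConvexGraph I φ ψ κ → Measurable φ →
      Measurable ψ → Measurable κ → Measurable e₁ → Measurable e₂ →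
      (∀ x ∈ I, e₁ x ∈ Ioo (0 : ℝ) 1) → (∀ x ∈ I, e₂ x ∈ Ioo (0 : ℝ) 1) → ∀ {g : ℝ → ℂ},
      Measurable g → Integrable g (curvatureMeasure I κ (1 / 3)) →
      ∫⁻ ζ, ‖∫ x, extensionKernel χ φ e₁ e₂ ζ x * g x ∂curvatureMeasure I κ (1 / 3)‖ₑ ^ (2 * s)
        ≤ C * (∫⁻ x, ‖g x‖ₑ ^ (2 * r / (3 - r)) ∂curvatureMeasure I κ (1 / 3))
            ^ ((3 - r) * (s - 1)) := by
  have hs0 : 0 ≤ s := by linarith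
  have hr : 1 < r ∧ r < 2 := by
    have hmul := hsr.mul_eq_add
    exact ⟨hsr.symm.lt, by nlinarith⟩
  obtain ⟨C, hC⟩ := exists_lintegral_rpow_integral_pairKernel_le hχ hχA hsr hs
  set c := Real.toNNReal (2 * (2 / (1 - (r - 1)) + 2 ^ ((r - 1) / 2)))
  refine ⟨2 ^ s * (C * c ^ (s - 1)), ?_⟩
  intro I φ ψ κ e₁ e₂ h hφ hψ hκ he₁ he₂ he₁_mem he₂_mem g hg hg_int
  have ht : (1 / 3 : ℝ) ≠ 0 := by norm_num
  set E := fun ζ => ∫ x, extensionKernel χ φ e₁ e₂ ζ x * g x ∂curvatureMeasure I κ (1 / 3)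
  set T := fun ζ => ∫ w, pairFunction ψ κ (1 / 3) g w * pairKernel χ φ e₁ e₂ w ζ ∂pairMeasure I ψ κ
  have htwo : ‖(2 : ℂ)‖ₑ = 2 := by rw [← ofReal_norm, Complex.norm_two, ENNReal.ofReal_ofNat]
  have hsq (ζ : ℝ × ℝ) : ‖E ζ‖ₑ ^ (2 * s) = 2 ^ s * ‖T ζ‖ₑ ^ s := by
    rw [ENNReal.rpow_mul, ENNReal.rpow_two, ← enorm_pow,
      h.sq_integral_extensionKernel_mul hφ hψ hκ hχ he₁ he₂ ht hg_int, enorm_mul,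
      ENNReal.mul_rpow_of_nonneg _ _ hs0, htwo]
  calc ∫⁻ ζ, ‖E ζ‖ₑ ^ (2 * s)
      = 2 ^ s * ∫⁻ ζ, ‖T ζ‖ₑ ^ s := by
        simp_rw [hsq]
        exact lintegral_const_mul' _ _ (by finiteness)
    _ ≤ 2 ^ s * (C * (∫⁻ w, ‖pairFunction ψ κ (1 / 3) g w‖ₑ ^ r ∂pairMeasure I ψ κ) ^ (s - 1)) :=
        mul_le_mul_right (hC h hφ hψ he₁ he₂ he₁_mem he₂_mem (measurable_pairFunction hψ hκ hg)
          (h.integrable_pairFunction hψ hκ ht hg_int)) _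
    _ ≤ 2 ^ s * (C * (c * (∫⁻ x, ‖g x‖ₑ ^ (2 * r / (3 - r)) ∂curvatureMeasure I κ (1 / 3))
          ^ (3 - r)) ^ (s - 1)) := by
        gcongr
        · linarith
        · exact h.lintegral_rpow_enorm_pairFunction_le hψ hκ hg hr.1 hr.2
    _ = _ := by
        rw [ENNReal.mul_rpow_of_nonneg _ _ (by linarith), ← ENNReal.rpow_mul]
        push_cast
        rw [ENNReal.coe_rpow_of_nonneg _ hs0, ENNReal.coe_rpow_of_nonneg _ (by linarith)]
        push_cast
        ring

theorem exists_lintegral_rpow_integral_extensionKernel_le (hχ : Integrable χ)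
    (hχA : ∀ u, ‖χ u‖ ≤ A / (1 + u ^ 2)) (hsr : s.HolderConjugate r) (hs : 2 < s) :
    ∃ C : ℝ≥0, ∀ {I : Set ℝ} {φ ψ κ e₁ e₂ : ℝ → ℝ}, ConvexGraph I φ ψ κ → Measurable e₁ →
      Measurable e₂ → (∀ x ∈ I, e₁ x ∈ Ioo (0 : ℝ) 1) → (∀ x ∈ I, e₂ x ∈ Ioo (0 : ℝ) 1) →
      ∀ {g : ℝ → ℂ}, Integrable g (curvatureMeasure I κ (1 / 3)) →
      ∫⁻ ζ, ‖∫ x, extensionKernel χ φ e₁ e₂ ζ x * g x ∂curvatureMeasure I κ (1 / 3)‖ₑ ^ (2 * s)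
        ≤ C * (∫⁻ x, ‖g x‖ₑ ^ (2 * r / (3 - r)) ∂curvatureMeasure I κ (1 / 3))
            ^ ((3 - r) * (s - 1)) := by
  obtain ⟨C, hC⟩ := exists_lintegral_rpow_integral_extensionKernel_le_of_measurable hχ hχA hsr hs
  refine ⟨C, ?_⟩
  intro I φ ψ κ e₁ e₂ h he₁ he₂ he₁_mem he₂_mem g hg
  obtain ⟨φ', ψ', κ', hφ', hψ', hκ', h', hφφ', hκκ'⟩ := h.exists_measurable
  rw [← curvatureMeasure_congr h.isOpen.measurableSet hκκ'] at hg ⊢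
  have hgmk := hg.aestronglyMeasurable.ae_eq_mk
  set g' := hg.aestronglyMeasurable.mk g
  have hE (ζ : ℝ × ℝ) : ∫ x, extensionKernel χ φ e₁ e₂ ζ x * g x ∂curvatureMeasure I κ' (1 / 3)
      = ∫ x, extensionKernel χ φ' e₁ e₂ ζ x * g' x ∂curvatureMeasure I κ' (1 / 3) := by
    refine integral_congr_ae ?_
    filter_upwards [hgmk, h'.ae_curvatureMeasure_mem _] with x hx hxI
    simp only [extensionKernel, hφφ' hxI, hx]
  have hT : ∫⁻ x, ‖g x‖ₑ ^ (2 * r / (3 - r)) ∂curvatureMeasure I κ' (1 / 3)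
      = ∫⁻ x, ‖g' x‖ₑ ^ (2 * r / (3 - r)) ∂curvatureMeasure I κ' (1 / 3) :=
    lintegral_congr_ae (hgmk.fun_comp fun z => ‖z‖ₑ ^ (2 * r / (3 - r)))
  simp_rw [hE, hT]
  exact hC h' hφ' hψ' hκ' he₁ he₂ he₁_mem he₂_mem
    hg.aestronglyMeasurable.stronglyMeasurable_mk.measurable (hg.congr hgmk)

theorem four_lt_of_lt_four_div_three (hp : p < 4 / 3) (hp' : 1 / p + 1 / p' = 1) : 4 < p' := by
  by_contra! hle
  have hlt : 3 / 4 < 1 / p := by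
    rw [one_div, ENNReal.lt_inv_iff_lt_inv, ENNReal.inv_div (by simp) (by simp)]
    exact hp
  have hsum : (3 / 4 + 1 / 4 : ℝ≥0∞) = 1 := by
    rw [← ENNReal.add_div, show (3 + 1 : ℝ≥0∞) = 4 by norm_num,
      ENNReal.div_self (by simp) (by simp)]
  have h1 : (1 : ℝ≥0∞) < 1 := calc
    (1 : ℝ≥0∞) = 3 / 4 + 1 / 4 := hsum.symm
    _ < 1 / p + 1 / p' := ENNReal.add_lt_add_of_lt_of_le (by finiteness) hlt (by gcongr)
    _ = 1 := hp'
  exact h1.false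

theorem exists_exponents (hp1 : 1 < p) (hp : p < 4 / 3) (hp' : 1 / p + 1 / p' = 1)
    (hq : p' = 3 * q) (hq' : 1 / q + 1 / q' = 1) :
    ∃ s r : ℝ, 2 < s ∧ s.HolderConjugate r ∧ p' = ENNReal.ofReal (2 * s) ∧
      q' = ENNReal.ofReal (2 * r / (3 - r)) := by
  have hp'_top : p' ≠ ∞ := by
    rintro rfl
    simp only [one_div, ENNReal.inv_top, add_zero, ENNReal.inv_eq_one] at hp'
    exact hp1.ne' hp'
  obtain ⟨s, hs, rfl⟩ : ∃ s : ℝ, 2 < s ∧ p' = ENNReal.ofReal (2 * s) := by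
    refine ⟨p'.toReal / 2, ?_, ?_⟩
    · have h4 : (4 : ℝ) < p'.toReal :=
        (ENNReal.toReal_lt_toReal (by simp) hp'_top).2 (four_lt_of_lt_four_div_three hp hp')
      linarith
    · rw [mul_div_cancel₀ _ two_ne_zero, ENNReal.ofReal_toReal hp'_top]
  have hs1 : 0 < s - 1 := by linarith
  have hs3 : 0 < 2 * s - 3 := by linarith
  have hq_inv : 1 / q = ENNReal.ofReal (3 / (2 * s)) := by
    rw [ENNReal.ofReal_div_of_pos (by linarith), hq, ENNReal.ofReal_ofNat,
      ← ENNReal.mul_div_mul_left 1 q (c := 3) (by simp) (by simp), mul_one]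
  have hq'_inv : q'⁻¹ = ENNReal.ofReal ((2 * s - 3) / (2 * s)) := by
    rw [← one_div, ← ENNReal.add_right_inj (a := 1 / q) (by rw [hq_inv]; exact ofReal_ne_top), hq',
      hq_inv, ← ENNReal.ofReal_add (by positivity) (by positivity), ← ENNReal.ofReal_one]
    congr 1
    field_simp
    ring
  refine ⟨s, s / (s - 1), hs, .conjExponent (by linarith), rfl, ?_⟩
  rw [← inv_inv q', hq'_inv, ← ENNReal.ofReal_inv_of_pos (by positivity), inv_div]
  congr 1
  have h3 : 3 - s / (s - 1) = (2 * s - 3) / (s - 1) := by field_simp; ring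
  rw [h3]
  field_simp

theorem exists_eLpNorm_integral_extensionKernel_le_of_one_lt (hχ : Integrable χ)
    (hχA : ∀ u, ‖χ u‖ ≤ A / (1 + u ^ 2)) (hp1 : 1 < p) (hp : p < 4 / 3)
    (hp' : 1 / p + 1 / p' = 1) (hq : p' = 3 * q) (hq' : 1 / q + 1 / q' = 1) :
    ∃ C : ℝ≥0, ∀ {I : Set ℝ} {φ ψ κ e₁ e₂ : ℝ → ℝ}, ConvexGraph I φ ψ κ → Measurable e₁ →
      Measurable e₂ → (∀ x ∈ I, e₁ x ∈ Ioo (0 : ℝ) 1) → (∀ x ∈ I, e₂ x ∈ Ioo (0 : ℝ) 1) →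
      ∀ {g : ℝ → ℂ}, Integrable g (curvatureMeasure I κ (1 / 3)) →
      eLpNorm (fun ζ => ∫ x, extensionKernel χ φ e₁ e₂ ζ x * g x ∂curvatureMeasure I κ (1 / 3)) p'
        ≤ C * eLpNorm g q' (curvatureMeasure I κ (1 / 3)) := by
  obtain ⟨s, r, hs, hsr, rfl, rfl⟩ := exists_exponents hp1 hp hp' hq hq'
  obtain ⟨C, hC⟩ := exists_lintegral_rpow_integral_extensionKernel_le hχ hχA hsr hs
  refine ⟨C ^ (1 / (2 * s)), ?_⟩
  intro I φ ψ κ e₁ e₂ h he₁ he₂ he₁_mem he₂_mem g hg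
  have hr1 : 1 < r := hsr.symm.lt
  have hr3 : 0 < 3 - r := by nlinarith [hsr.mul_eq_add]
  have hq_pos : 0 < 2 * r / (3 - r) := by positivity
  have hexp : (3 - r) * (s - 1) * (1 / (2 * s)) = 1 / (2 * r / (3 - r)) := by
    have hs0 : s ≠ 0 := by positivity
    field_simp
    linear_combination hsr.sub_one_mul_conj
  rw [eLpNorm_eq_lintegral_rpow_enorm_toReal (by simpa using by linarith) ofReal_ne_top,
    eLpNorm_eq_lintegral_rpow_enorm_toReal (by simpa using hq_pos) ofReal_ne_top,
    toReal_ofReal (by positivity), toReal_ofReal hq_pos.le]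
  have hC' := ENNReal.rpow_le_rpow (hC h he₁ he₂ he₁_mem he₂_mem hg)
    (z := 1 / (2 * s)) (by positivity)
  rwa [ENNReal.mul_rpow_of_nonneg _ _ (by positivity), ← ENNReal.rpow_mul, hexp,
    ← ENNReal.coe_rpow_of_nonneg _ (by positivity)] at hC'

theorem eLpNorm_top_integral_extensionKernel_le (χ : ℝ → ℂ) (φ e₁ e₂ : ℝ → ℝ) (g : ℝ → ℂ)
    (μ : Measure ℝ) :
    eLpNorm (fun ζ => ∫ x, extensionKernel χ φ e₁ e₂ ζ x * g x ∂μ) ∞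
      ≤ ENNReal.ofReal ((∫ u, ‖χ u‖) ^ 2) * eLpNorm g 1 μ := by
  rw [eLpNorm_exponent_top, eLpNorm_one_eq_lintegral_enorm]
  refine eLpNormEssSup_le_of_ae_enorm_bound (.of_forall fun ζ => ?_)
  calc ‖∫ x, extensionKernel χ φ e₁ e₂ ζ x * g x ∂μ‖ₑ
      ≤ ∫⁻ x, ‖extensionKernel χ φ e₁ e₂ ζ x * g x‖ₑ ∂μ := enorm_integral_le_lintegral_enorm _
    _ ≤ ∫⁻ x, ENNReal.ofReal ((∫ u, ‖χ u‖) ^ 2) * ‖g x‖ₑ ∂μ := by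
        refine lintegral_mono fun x => ?_
        rw [enorm_mul, ← ofReal_norm]
        gcongr
        exact norm_extensionKernel_le χ φ e₁ e₂ ζ x
    _ = _ := lintegral_const_mul' _ _ ofReal_ne_top

theorem eq_top_of_one_div_one_add (hp : 1 / 1 + 1 / p = 1) : p = ∞ := by
  rw [one_div_one] at hp
  simpa using (ENNReal.add_right_inj (by simp) : 1 + 1 / p = 1 + 0 ↔ _).1 (by simpa using hp)

theorem exists_eLpNorm_integral_extensionKernel_le (hχ : Integrable χ)
    (hχA : ∀ u, ‖χ u‖ ≤ A / (1 + u ^ 2)) (hp1 : 1 ≤ p) (hp : p < 4 / 3)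
    (hp' : 1 / p + 1 / p' = 1) (hq : p' = 3 * q) (hq' : 1 / q + 1 / q' = 1) :
    ∃ C : ℝ≥0, ∀ {I : Set ℝ} {φ ψ κ e₁ e₂ : ℝ → ℝ}, ConvexGraph I φ ψ κ → Measurable e₁ →
      Measurable e₂ → (∀ x ∈ I, e₁ x ∈ Ioo (0 : ℝ) 1) → (∀ x ∈ I, e₂ x ∈ Ioo (0 : ℝ) 1) →
      ∀ {g : ℝ → ℂ}, Integrable g (curvatureMeasure I κ (1 / 3)) →
      eLpNorm (fun ζ => ∫ x, extensionKernel χ φ e₁ e₂ ζ x * g x ∂curvatureMeasure I κ (1 / 3)) p'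
        ≤ C * eLpNorm g q' (curvatureMeasure I κ (1 / 3)) := by
  rcases hp1.eq_or_lt with rfl | hp1
  · obtain rfl : p' = ∞ := eq_top_of_one_div_one_add hp'
    have hq_top : q = ∞ := by
      by_contra h
      exact ENNReal.mul_ne_top (by simp) h hq.symm
    obtain rfl : q' = 1 := by simpa [hq_top] using hq'
    exact ⟨_, fun _ _ _ _ _ _ _ => eLpNorm_top_integral_extensionKernel_le χ _ _ _ _ _⟩
  · exact exists_eLpNorm_integral_extensionKernel_le_of_one_lt hχ hχA hp1 hp hp' hq hq'

end Extension

theorem exists_norm_le_div_one_add_sq {E : Type*} [NormedAddCommGroup E] [NormedSpace ℝ E]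
    (χ : 𝓢(ℝ, E)) : ∃ A, ∀ u, ‖χ u‖ ≤ A / (1 + u ^ 2) := by
  obtain ⟨A₀, -, hA₀⟩ := χ.decay 0 0
  obtain ⟨A₂, -, hA₂⟩ := χ.decay 2 0
  refine ⟨A₀ + A₂, fun u => ?_⟩
  have h₀ := hA₀ u
  have h₂ := hA₂ u
  simp only [norm_iteratedFDeriv_zero, pow_zero, one_mul, Real.norm_eq_abs, sq_abs] at h₀ h₂
  rw [le_div_iff₀ (by positivity)]
  linarith

theorem convexGraph_of_contDiffOn {I : Set ℝ} (hI : IsOpen I) (hI' : I.OrdConnected) {φ κ : ℝ → ℝ}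
    (hφ : ContDiffOn ℝ 2 φ I) (hκ : ∀ x ∈ I, κ x = deriv (deriv φ) x) (hκ₀ : ∀ x ∈ I, 0 ≤ κ x) :
    ConvexGraph I φ (deriv φ) κ := by
  have hφ' : ContDiffOn ℝ 1 (deriv φ) I :=
    hφ.deriv_of_isOpen hI one_add_one_eq_two.le
  refine ⟨hI, hI', fun x hx => ?_, fun x hx => ?_, hκ₀⟩
  · exact ((hφ.differentiableOn two_ne_zero).differentiableAt (hI.mem_nhds hx)).hasDerivAt
  · rw [hκ x hx]
    exact ((hφ'.differentiableOn one_ne_zero).differentiableAt (hI.mem_nhds hx)).hasDerivAt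

theorem integrable_curvatureMeasure {I : Set ℝ} (hI : MeasurableSet I) {κ : ℝ → ℝ}
    (hκ : ContinuousOn κ I) {t : ℝ} (ht : 0 ≤ t) {E : Type*} [NormedAddCommGroup E]
    [NormedSpace ℝ E] {g : ℝ → E} (hg : Continuous g) (hgc : HasCompactSupport g)
    (hgI : tsupport g ⊆ I) : Integrable g (curvatureMeasure I κ t) := by
  have hκt : ContinuousOn (fun x => κ x ^ t) I := hκ.rpow_const fun x _ => .inr ht
  have hF : IntegrableOn (fun x => (ENNReal.ofReal (κ x ^ t)).toReal • g x) (tsupport g) := by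
    refine ContinuousOn.integrableOn_compact hgc ?_
    simp only [ENNReal.toReal_ofReal']
    exact ((hκt.mono hgI).sup continuousOn_const).smul hg.continuousOn
  rw [curvatureMeasure, integrable_withDensity_iff_integrable_smul₀'
    (hκt.aemeasurable hI).ennreal_ofReal (.of_forall fun _ => ofReal_lt_top)]
  rw [integrableOn_iff_integrable_of_support_subset] at hF
  · exact hF.integrableOn
  · exact (Function.support_smul_subset_right _ g).trans (subset_tsupport g)

theorem maximal_restriction_stmt3_general {χ : ℝ → ℂ} {A : ℝ} (hχ : Integrable χ)
    (hχA : ∀ u, ‖χ u‖ ≤ A / (1 + u ^ 2)) {p p' q q' : ℝ≥0∞} (hp1 : 1 ≤ p) (hp : p < 4 / 3)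
    (hp' : 1 / p + 1 / p' = 1) (hq : p' = 3 * q) (hq' : 1 / q + 1 / q' = 1) :
    ∃ C : ℝ, 0 < C ∧ ∀ {I : Set ℝ} {φ ψ κ : ℝ → ℝ}, ConvexGraph I φ ψ κ →
      ∀ e₁ e₂ : ℝ → ℝ, Measurable e₁ → Measurable e₂ →
        (∀ x ∈ I, e₁ x ∈ Ioo (0 : ℝ) 1) → (∀ x ∈ I, e₂ x ∈ Ioo (0 : ℝ) 1) →
        ∀ g : ℝ → ℂ, Integrable g (curvatureMeasure I κ (1 / 3)) →
          eLpNorm (fun ζ : ℝ × ℝ => ∫ x in I, fourierTransform1 χ (e₁ x * ζ.1) *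
              fourierTransform1 χ (e₂ x * ζ.2) * Complex.exp (Complex.I * (ζ.1 * x + ζ.2 * φ x)) *
              g x * ((κ x ^ ((1 : ℝ) / 3) : ℝ) : ℂ)) p' volume
            ≤ ENNReal.ofReal C * eLpNorm g q' (curvatureMeasure I κ (1 / 3)) := by
  obtain ⟨C, hC⟩ := exists_eLpNorm_integral_extensionKernel_le hχ hχA hp1 hp hp' hq hq'
  refine ⟨C + 1, by positivity, fun h e₁ e₂ he₁ he₂ he₁_mem he₂_mem g hg => ?_⟩
  have hle := hC h he₁ he₂ he₁_mem he₂_mem hg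
  simp only [h.integral_curvatureMeasure] at hle
  refine hle.trans ?_
  gcongr
  rw [← ENNReal.ofReal_coe_nnreal]
  exact ofReal_le_ofReal (by linarith)

/-- the linearized extension-type operator
`ℰ_{ε',ε''} g(ξ,η) = ∫_I χ̂(ε'(x)ξ) χ̂(ε''(x)η) e^{i(ξx + ηφ(x))} g(x) κ(x)^{1/3} dx`
satisfies `‖ℰ_{ε',ε''} g‖_{L^{p'}(ℝ²)} ≤ C_p ‖g‖_{L^{q'}(I,μ)}` for `g ∈ C_c^∞(I)`,
uniformly in the measurable functions `ε', ε'' : I → (0,1)`, where `1 ≤ p < 4/3`,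
`p' = 3q`, and `μ` has density `κ^{1/3}` on the bounded open interval `I`. -/
theorem maximal_restriction_stmt3
    (a b : ℝ) (hab : a < b)
    (φ : ℝ → ℝ) (hφ : ContDiffOn ℝ 2 φ (Ioo a b)) (hconv : ConvexOn ℝ (Ioo a b) φ)
    (κ : ℝ → ℝ) (hκ : ∀ x ∈ Ioo a b, κ x = deriv (deriv φ) x)
    (hκ0 : ∀ x ∈ Ioo a b, 0 ≤ κ x)
    (μ : Measure ℝ)
    (hμ : μ = (volume.restrict (Ioo a b)).withDensity
      (fun x => ENNReal.ofReal (κ x ^ ((1 : ℝ) / 3))))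
    (χ : 𝓢(ℝ, ℝ)) (hχeven : ∀ u, χ (-u) = χ u) (hχint : ∫ u, χ u = 1)
    (p p' q q' : ℝ≥0∞) (hp1 : 1 ≤ p) (hp : p < 4 / 3)
    (hp' : 1 / p + 1 / p' = 1) (hq : p' = 3 * q) (hq' : 1 / q + 1 / q' = 1) :
    ∃ C : ℝ, 0 < C ∧
      ∀ (ε' ε'' : ℝ → ℝ), Measurable ε' → Measurable ε'' →
        (∀ x ∈ Ioo a b, ε' x ∈ Ioo (0 : ℝ) 1) → (∀ x ∈ Ioo a b, ε'' x ∈ Ioo (0 : ℝ) 1) →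
        ∀ g : ℝ → ℂ, ContDiff ℝ (⊤ : ℕ∞) g → HasCompactSupport g → tsupport g ⊆ Ioo a b →
          eLpNorm (fun ξη : ℝ × ℝ => ∫ x in Ioo a b,
              fourierTransform1 (fun u => (χ u : ℂ)) (ε' x * ξη.1) *
              fourierTransform1 (fun u => (χ u : ℂ)) (ε'' x * ξη.2) *
              Complex.exp (Complex.I * (ξη.1 * x + ξη.2 * φ x)) * g x *
              ((κ x ^ ((1 : ℝ) / 3) : ℝ) : ℂ)) p' volume
            ≤ ENNReal.ofReal C * eLpNorm g q' μ := by
  subst hμ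
  obtain ⟨A, hA⟩ := exists_norm_le_div_one_add_sq χ
  obtain ⟨C, hC, hle⟩ := maximal_restriction_stmt3_general (χ := fun u => (χ u : ℂ))
    χ.integrable.ofReal (by simpa using hA) hp1 hp hp' hq hq'
  have hgraph := convexGraph_of_contDiffOn isOpen_Ioo ordConnected_Ioo hφ hκ hκ0
  refine ⟨C, hC, fun ε' ε'' hε' hε'' hε'_mem hε''_mem g hg hgc hgI =>
    hle hgraph ε' ε'' hε' hε'' hε'_mem hε''_mem g ?_⟩
  refine integrable_curvatureMeasure measurableSet_Ioo ?_ (by norm_num) hg.continuous hgc hgI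
  exact ((hφ.deriv_of_isOpen isOpen_Ioo one_add_one_eq_two.le).continuousOn_deriv_of_isOpen
    isOpen_Ioo le_rfl).congr hκ
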